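/- arXiv:0904.0301 — 7 statements merged into one kernel-verified Lean document; each statement's English description precedes it below -/
import Mathlib

section
/- Let ψ : ℝ → E³ be a unit speed curve with Frenet apparatus (T, N, B, κ, τ), and suppose κ(s) ≠ 0 and τ(s) ≠ 0 for every s. Then the position vector ψ satisfies the fourth-order vector differential equation d/ds [ (1/τ(s)) · d/ds ( (1/κ(s)) · ψ''(s) ) ] + (κ(s)/τ(s) + τ(s)/κ(s)) · ψ''(s) + (d/ds (κ(s)/τ(s))) · ψ'(s) = 0 for all s ∈ ℝ. -/
noncomputable section
open Real
open scoped RealInnerProductSpace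

/-- Euclidean 3-space with the standard inner product. -/
abbrev E3 := EuclideanSpace ℝ (Fin 3)

/-- The point of `E3` with coordinates `(x, y, z)`. -/
def vec3 (x y z : ℝ) : E3 := !₂[x, y, z]

/-- The standard cross product on `E3`. -/
def cross3 (u v : E3) : E3 :=
  vec3 (u 1 * v 2 - u 2 * v 1) (u 2 * v 0 - u 0 * v 2) (u 0 * v 1 - u 1 * v 0)

/-- The third standard basis vector `e₃` of `E3`. -/
def e₃ : E3 := EuclideanSpace.single (2 : Fin 3) (1 : ℝ)

/-!
Dividing the Frenet equation for `N'` by `τ` gives `(1 / τ) • N' = B - (κ / τ) • T`, where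
`N = (1 / κ) • ψ''`. Differentiate once more: both `B' = -τ • N` and `T' = κ • N` are multiples of
`ψ'' = κ • N`, so the only other term is the one in which the derivative falls on `κ / τ`.
-/

open Filter Topology

section FrenetEquations

variable {𝕜 E : Type*} [NontriviallyNormedField 𝕜] [NormedAddCommGroup E] [NormedSpace 𝕜 E]
  {ψ T N B : 𝕜 → E} {κ τ : 𝕜 → 𝕜} {s : 𝕜}

lemma inv_curvature_smul_deriv_deriv_eventuallyEq_normal
    (hψ : ∀ᶠ u in 𝓝 s, HasDerivAt ψ (T u) u)
    (hT : ∀ᶠ u in 𝓝 s, HasDerivAt T (κ u • N u) u) (hκ : ∀ᶠ u in 𝓝 s, κ u ≠ 0) :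
    (fun u => (1 / κ u) • deriv (deriv ψ) u) =ᶠ[𝓝 s] N := by
  have hψ' : deriv ψ =ᶠ[𝓝 s] T := hψ.mono fun _ h => h.deriv
  filter_upwards [hψ'.deriv, hT, hκ] with u hψ'' hTu hκu
  rw [hψ'', hTu.deriv, one_div, inv_smul_smul₀ hκu]

lemma inv_torsion_smul_deriv_normal (hN : HasDerivAt N (-κ s • T s + τ s • B s) s)
    (hτ : τ s ≠ 0) : (1 / τ s) • deriv N s = B s - (κ s / τ s) • T s := by
  rw [hN.deriv, smul_add, one_div, inv_smul_smul₀ hτ]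
  module

lemma hasDerivAt_binormal_sub_ratio_smul_tangent (hT : HasDerivAt T (κ s • N s) s)
    (hB : HasDerivAt B (-τ s • N s) s) (hκτ : DifferentiableAt 𝕜 (fun u => κ u / τ u) s)
    (hκ : κ s ≠ 0) :
    HasDerivAt (fun u => B u - (κ u / τ u) • T u)
      (-((κ s / τ s + τ s / κ s) • κ s • N s + deriv (fun u => κ u / τ u) s • T s)) s := by
  refine (hB.sub (hκτ.hasDerivAt.smul hT)).congr_deriv ?_
  have hτN : τ s • N s = (τ s / κ s) • κ s • N s := by rw [smul_smul, div_mul_cancel₀ _ hκ]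
  rw [neg_smul, hτN]
  module

theorem position_vector_fourth_order_ode_general
    (hψ : ∀ᶠ u in 𝓝 s, HasDerivAt ψ (T u) u)
    (hT : ∀ᶠ u in 𝓝 s, HasDerivAt T (κ u • N u) u)
    (hN : ∀ᶠ u in 𝓝 s, HasDerivAt N (-κ u • T u + τ u • B u) u)
    (hB : HasDerivAt B (-τ s • N s) s) (hκτ : DifferentiableAt 𝕜 (fun u => κ u / τ u) s)
    (hκ : ∀ᶠ u in 𝓝 s, κ u ≠ 0) (hτ : ∀ᶠ u in 𝓝 s, τ u ≠ 0) :
    deriv (fun u => (1 / τ u) • deriv (fun w => (1 / κ w) • deriv (deriv ψ) w) u) s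
      + (κ s / τ s + τ s / κ s) • deriv (deriv ψ) s
      + deriv (fun u => κ u / τ u) s • deriv ψ s = 0 := by
  have hψ' : deriv ψ =ᶠ[𝓝 s] T := hψ.mono fun _ h => h.deriv
  have hψ'' : deriv (deriv ψ) s = κ s • N s := hψ'.deriv_eq.trans hT.self_of_nhds.deriv
  have hnormal := inv_curvature_smul_deriv_deriv_eventuallyEq_normal hψ hT hκ
  have hbinormal : (fun u => (1 / τ u) • deriv (fun w => (1 / κ w) • deriv (deriv ψ) w) u)
      =ᶠ[𝓝 s] fun u => B u - (κ u / τ u) • T u := by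
    filter_upwards [hnormal.deriv, hN, hτ] with u hu hNu hτu
    rw [hu, inv_torsion_smul_deriv_normal hNu hτu]
  have hderiv :=
    hasDerivAt_binormal_sub_ratio_smul_tangent hT.self_of_nhds hB hκτ hκ.self_of_nhds
  rw [hbinormal.deriv_eq, hderiv.deriv, hψ'', hψ'.self_of_nhds, add_assoc, neg_add_cancel]

end FrenetEquations

/-- The position vector of every unit speed space curve satisfies a fourth-order
vector differential equation. -/
theorem position_vector_fourth_order_ode
    (ψ T N B : ℝ → E3) (κ τ : ℝ → ℝ)
    (hψ : ContDiff ℝ (⊤ : ℕ∞) ψ) (hTsm : ContDiff ℝ (⊤ : ℕ∞) T)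
    (hNsm : ContDiff ℝ (⊤ : ℕ∞) N) (hBsm : ContDiff ℝ (⊤ : ℕ∞) B)
    (hκsm : ContDiff ℝ (⊤ : ℕ∞) κ) (hτsm : ContDiff ℝ (⊤ : ℕ∞) τ)
    (hT1 : ∀ s, ‖T s‖ = 1) (hN1 : ∀ s, ‖N s‖ = 1) (hB1 : ∀ s, ‖B s‖ = 1)
    (hTN : ∀ s, ⟪T s, N s⟫ = 0) (hTB : ∀ s, ⟪T s, B s⟫ = 0) (hNB : ∀ s, ⟪N s, B s⟫ = 0)
    (hψT : ∀ s, deriv ψ s = T s)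
    (hT' : ∀ s, deriv T s = κ s • N s)
    (hN' : ∀ s, deriv N s = (-(κ s)) • T s + τ s • B s)
    (hB' : ∀ s, deriv B s = (-(τ s)) • N s)
    (hκ0 : ∀ s, κ s ≠ 0) (hτ0 : ∀ s, τ s ≠ 0) :
    ∀ s : ℝ,
      deriv (fun u => (1 / τ u) • deriv (fun w => (1 / κ w) • deriv (deriv ψ) w) u) s
        + (κ s / τ s + τ s / κ s) • deriv (deriv ψ) s
        + (deriv (fun u => κ u / τ u) s) • deriv ψ s = 0 := by
  have hasDerivAt {f f' : ℝ → E3} (hf : ContDiff ℝ (⊤ : ℕ∞) f) (hf' : ∀ s, deriv f s = f' s)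
      (s : ℝ) : HasDerivAt f (f' s) s :=
    (hf.differentiable (by simp) s).hasDerivAt.congr_deriv (hf' s)
  intro s
  exact position_vector_fourth_order_ode_general (.of_forall (hasDerivAt hψ hψT))
    (.of_forall (hasDerivAt hTsm hT')) (.of_forall (hasDerivAt hNsm hN')) (hasDerivAt hBsm hB' s)
    ((hκsm.differentiable (by simp) s).fun_div (hτsm.differentiable (by simp) s) (hτ0 s))
    (.of_forall hκ0) (.of_forall hτ0)
end
end

section
/- Let ψ : ℝ → E³ be a unit speed curve with Frenet apparatus (T, N, B, κ, τ), with κ(s) > 0 and τ(s) ≠ 0 for every s, and set θ(s) = ∫₀ˢ κ(t) dt. Suppose g : ℝ → E³ and h : ℝ → ℝ are smooth with h nowhere zero, g(θ(s)) = T(s) and h(θ(s)) = κ(s)/τ(s) for all s. Then for every s, writing x = θ(s), one has (d/dx)(h(x)·g''(x)) + ((h(x)² + 1)/h(x)) · g'(x) + h'(x) · g(x) = 0. -/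
noncomputable section
open Real
open scoped RealInnerProductSpace

/-!
Since `θ' = κ ≠ 0`, the parameter `θ` is locally invertible, so `F (θ s) = G s` forces `F` to be
differentiable at `θ s` with `F'(θ s) = G'(s) / κ s`. The Frenet equations thus become
`g' = N`, `g'' = -T + h⁻¹ B` along `θ`. Hence `h g'' = B - h T`, and one more differentiation gives
`(h g'')' = -h⁻¹ N - h' T - h N = -((h² + 1) / h) g' - h' g`.
-/

section

variable {𝕜 E : Type*} [NontriviallyNormedField 𝕜] [NormedAddCommGroup E] [NormedSpace 𝕜 E]

theorem hasDerivAt_of_comp_hasStrictDerivAt [CompleteSpace 𝕜] {F : 𝕜 → E} {φ : 𝕜 → 𝕜} {φ' s : 𝕜}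
    {v : E} (hφ : HasStrictDerivAt φ φ' s) (hφ' : φ' ≠ 0) (hF : HasDerivAt (F ∘ φ) (φ' • v) s) :
    HasDerivAt F v (φ s) := by
  let ψ := hφ.localInverse φ φ' s hφ'
  have hψ : HasDerivAt ψ φ'⁻¹ (φ s) := (hφ.to_localInverse hφ').hasDerivAt
  have hψs : ψ (φ s) = s := HasStrictFDerivAt.localInverse_apply_image _
  have hφψ : ∀ᶠ x in nhds (φ s), φ (ψ x) = x := HasStrictFDerivAt.eventually_right_inverse _
  have hcomp : HasDerivAt ((F ∘ φ) ∘ ψ) (φ'⁻¹ • φ' • v) (φ s) :=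
    HasDerivAt.scomp (φ s) (hψs.symm ▸ hF) hψ
  rw [inv_smul_smul₀ hφ'] at hcomp
  exact hcomp.congr_of_eventuallyEq (hφψ.mono fun x hx => congrArg F hx.symm)

/-- The Frenet equations for a moving frame `(T, N, B)` with curvature `κ` and torsion `τ`. The
frame takes values in an arbitrary normed space, and no orthonormality is imposed. -/
structure FrenetEquations (T N B : 𝕜 → E) (κ τ : 𝕜 → 𝕜) : Prop where
  hasDerivAt_tangent (s : 𝕜) : HasDerivAt T (κ s • N s) s
  hasDerivAt_normal (s : 𝕜) : HasDerivAt N (-κ s • T s + τ s • B s) s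
  hasDerivAt_binormal (s : 𝕜) : HasDerivAt B (-τ s • N s) s

namespace FrenetEquations

theorem of_deriv {T N B : 𝕜 → E} {κ τ : 𝕜 → 𝕜} (hT : Differentiable 𝕜 T)
    (hN : Differentiable 𝕜 N) (hB : Differentiable 𝕜 B) (hT' : ∀ s, deriv T s = κ s • N s)
    (hN' : ∀ s, deriv N s = -κ s • T s + τ s • B s) (hB' : ∀ s, deriv B s = -τ s • N s) :
    FrenetEquations T N B κ τ where
  hasDerivAt_tangent s := hT' s ▸ (hT s).hasDerivAt
  hasDerivAt_normal s := hN' s ▸ (hN s).hasDerivAt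
  hasDerivAt_binormal s := hB' s ▸ (hB s).hasDerivAt

variable [CompleteSpace 𝕜] {T N B : 𝕜 → E} {κ τ θ h : 𝕜 → 𝕜} {g : 𝕜 → E}

theorem deriv_comp_eq_normal (hF : FrenetEquations T N B κ τ)
    (hθ : ∀ s, HasStrictDerivAt θ (κ s) s) (hκ : ∀ s, κ s ≠ 0) (hg : ∀ s, g (θ s) = T s) (s : 𝕜) :
    deriv g (θ s) = N s := by
  have hgT : g ∘ θ = T := funext hg
  exact (hasDerivAt_of_comp_hasStrictDerivAt (hθ s) (hκ s)
    (hgT ▸ hF.hasDerivAt_tangent s)).deriv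

theorem deriv_deriv_comp_eq (hF : FrenetEquations T N B κ τ)
    (hθ : ∀ s, HasStrictDerivAt θ (κ s) s) (hκ : ∀ s, κ s ≠ 0) (hg : ∀ s, g (θ s) = T s) (s : 𝕜) :
    deriv (deriv g) (θ s) = -T s + (τ s / κ s) • B s := by
  have hgN : deriv g ∘ θ = N := funext (hF.deriv_comp_eq_normal hθ hκ hg)
  refine (hasDerivAt_of_comp_hasStrictDerivAt (hθ s) (hκ s) ?_).deriv
  rw [hgN, smul_add, smul_smul, mul_div_cancel₀ _ (hκ s), smul_neg, ← neg_smul]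
  exact hF.hasDerivAt_normal s

theorem smul_deriv_deriv_comp_eq (hF : FrenetEquations T N B κ τ)
    (hθ : ∀ s, HasStrictDerivAt θ (κ s) s) (hκ : ∀ s, κ s ≠ 0) (hτ : ∀ s, τ s ≠ 0)
    (hg : ∀ s, g (θ s) = T s) (hh : ∀ s, h (θ s) = κ s / τ s) (s : 𝕜) :
    h (θ s) • deriv (deriv g) (θ s) = B s - h (θ s) • T s := by
  have hcancel : h (θ s) * (τ s / κ s) = 1 := by
    rw [hh, div_mul_div_cancel₀ (hτ s), div_self (hκ s)]
  rw [hF.deriv_deriv_comp_eq hθ hκ hg, smul_add, smul_smul, hcancel]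
  module

theorem hasDerivAt_smul_deriv_deriv (hF : FrenetEquations T N B κ τ)
    (hθ : ∀ s, HasStrictDerivAt θ (κ s) s) (hκ : ∀ s, κ s ≠ 0) (hτ : ∀ s, τ s ≠ 0)
    (hg : ∀ s, g (θ s) = T s) (hh : ∀ s, h (θ s) = κ s / τ s) {s : 𝕜}
    (hhd : DifferentiableAt 𝕜 h (θ s)) :
    HasDerivAt (fun x => h x • deriv (deriv g) x)
      (-((h (θ s) ^ 2 + 1) / h (θ s)) • N s - deriv h (θ s) • T s) (θ s) := by
  refine hasDerivAt_of_comp_hasStrictDerivAt (hθ s) (hκ s) ?_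
  have hcomp : (fun x => h x • deriv (deriv g) x) ∘ θ = B - (h ∘ θ) • T :=
    funext (hF.smul_deriv_deriv_comp_eq hθ hκ hτ hg hh)
  have hderiv : HasDerivAt (B - (h ∘ θ) • T)
      (-τ s • N s - (h (θ s) • κ s • N s + (deriv h (θ s) * κ s) • T s)) s :=
    (hF.hasDerivAt_binormal s).sub
      ((hhd.hasDerivAt.comp s (hθ s).hasDerivAt).smul (hF.hasDerivAt_tangent s))
  have hcoeff : κ s * ((h (θ s) ^ 2 + 1) / h (θ s)) = h (θ s) * κ s + τ s := by
    have := hκ s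
    have := hτ s
    rw [hh]
    field_simp
  rw [hcomp]
  convert hderiv using 1
  rw [smul_sub, smul_smul, mul_neg, hcoeff]
  module

end FrenetEquations

theorem tangent_ode_theta_parameter_general [CompleteSpace 𝕜] {T N B : 𝕜 → E} {κ τ θ h : 𝕜 → 𝕜}
    {g : 𝕜 → E} (hF : FrenetEquations T N B κ τ) (hθ : ∀ s, HasStrictDerivAt θ (κ s) s)
    (hκ : ∀ s, κ s ≠ 0) (hτ : ∀ s, τ s ≠ 0) (hg : ∀ s, g (θ s) = T s)
    (hh : ∀ s, h (θ s) = κ s / τ s) {s : 𝕜} (hhd : DifferentiableAt 𝕜 h (θ s)) :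
    deriv (fun x => h x • deriv (deriv g) x) (θ s)
      + ((h (θ s) ^ 2 + 1) / h (θ s)) • deriv g (θ s) + deriv h (θ s) • g (θ s) = 0 := by
  rw [(hF.hasDerivAt_smul_deriv_deriv hθ hκ hτ hg hh hhd).deriv,
    hF.deriv_comp_eq_normal hθ hκ hg, hg]
  module

end

/-- In terms of the new parameter θ = ∫ κ ds, the tangent vector satisfies the
simplified third-order equation with f = κ/τ. -/
theorem tangent_ode_theta_parameter
    (ψ T N B : ℝ → E3) (κ τ : ℝ → ℝ)
    (hψ : ContDiff ℝ (⊤ : ℕ∞) ψ) (hTsm : ContDiff ℝ (⊤ : ℕ∞) T)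
    (hNsm : ContDiff ℝ (⊤ : ℕ∞) N) (hBsm : ContDiff ℝ (⊤ : ℕ∞) B)
    (hκsm : ContDiff ℝ (⊤ : ℕ∞) κ) (hτsm : ContDiff ℝ (⊤ : ℕ∞) τ)
    (hT1 : ∀ s, ‖T s‖ = 1) (hN1 : ∀ s, ‖N s‖ = 1) (hB1 : ∀ s, ‖B s‖ = 1)
    (hTN : ∀ s, ⟪T s, N s⟫ = 0) (hTB : ∀ s, ⟪T s, B s⟫ = 0) (hNB : ∀ s, ⟪N s, B s⟫ = 0)
    (hψT : ∀ s, deriv ψ s = T s)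
    (hT' : ∀ s, deriv T s = κ s • N s)
    (hN' : ∀ s, deriv N s = (-(κ s)) • T s + τ s • B s)
    (hB' : ∀ s, deriv B s = (-(τ s)) • N s)
    (hκpos : ∀ s, 0 < κ s) (hτ0 : ∀ s, τ s ≠ 0)
    (θ : ℝ → ℝ) (hθ : ∀ s, θ s = ∫ t in (0:ℝ)..s, κ t)
    (g : ℝ → E3) (h : ℝ → ℝ)
    (hg : ContDiff ℝ (⊤ : ℕ∞) g) (hh : ContDiff ℝ (⊤ : ℕ∞) h)
    (hh0 : ∀ x, h x ≠ 0)
    (hgT : ∀ s, g (θ s) = T s) (hhf : ∀ s, h (θ s) = κ s / τ s) :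
    ∀ s : ℝ,
      deriv (fun x => h x • deriv (deriv g) x) (θ s)
        + (((h (θ s)) ^ 2 + 1) / h (θ s)) • deriv g (θ s)
        + (deriv h (θ s)) • g (θ s) = 0 := by
  have hF : FrenetEquations T N B κ τ := .of_deriv (hTsm.differentiable (by simp))
    (hNsm.differentiable (by simp)) (hBsm.differentiable (by simp)) hT' hN' hB'
  exact fun s => tangent_ode_theta_parameter_general hF
    (fun t => funext hθ ▸ hκsm.continuous.integral_hasStrictDerivAt 0 t)
    (fun t => (hκpos t).ne') hτ0 hgT hhf (hh.differentiable (by simp) (θ s))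
end
end

section
/- Let ψ : ℝ → E³ be a unit speed curve with Frenet apparatus (T, N, B, κ, τ), with κ(s) > 0 for every s, and let α ∈ (0, π) be such that τ(s) = cot(α)·κ(s) for all s (so ψ is a general helix). Set φ(s) = (1/ sin α) ∫₀ˢ κ(t) dt, and suppose g : ℝ → E³ is smooth with g(φ(s)) = T(s) for all s. Then for every s, writing x = φ(s), one has g'''(x) + g'(x) = 0. -/
noncomputable section
open Real
open scoped RealInnerProductSpace

/-!
In the parameter `φ` the Frenet equations of a general helix have constant coefficients: as
`dφ/ds = κ / sin α`, they become `dT/dφ = sin α N`, `dN/dφ = -sin α T + cos α B` and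
`dB/dφ = -cos α N`. Hence `d³T/dφ³ = -(sin² α + cos² α) sin α N = -dT/dφ`.
-/

section Reparametrization

open scoped Topology

variable {𝕜 E : Type*} [NontriviallyNormedField 𝕜] [NormedAddCommGroup E] [NormedSpace 𝕜 E]

theorem deriv_eq_of_comp_eventuallyEq {φ : 𝕜 → 𝕜} {g F : 𝕜 → E} {v s : 𝕜} {F' : E}
    (hg : DifferentiableAt 𝕜 g (φ s)) (hφ : HasDerivAt φ v s) (hv : v ≠ 0)
    (hF : HasDerivAt F (v • F') s) (hgF : g ∘ φ =ᶠ[𝓝 s] F) : deriv g (φ s) = F' :=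
  smul_right_injective E hv <|
    (hg.hasDerivAt.scomp s hφ).unique (hF.congr_of_eventuallyEq hgF)

theorem deriv_deriv_deriv_eq_of_frenet_proportional {T N B g : 𝕜 → E} {κ τ φ v : 𝕜 → 𝕜} {a b : 𝕜}
    (hT : ∀ s, HasDerivAt T (κ s • N s) s)
    (hN : ∀ s, HasDerivAt N (-κ s • T s + τ s • B s) s)
    (hB : ∀ s, HasDerivAt B (-τ s • N s) s)
    (hφ : ∀ s, HasDerivAt φ (v s) s) (hv : ∀ s, v s ≠ 0)
    (hκ : ∀ s, κ s = v s * a) (hτ : ∀ s, τ s = v s * b)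
    (hg : ContDiff 𝕜 3 g) (hgT : ∀ s, g (φ s) = T s) (s : 𝕜) :
    deriv (deriv (deriv g)) (φ s) = -(a ^ 2 + b ^ 2) • deriv g (φ s) := by
  have hg' : ContDiff 𝕜 2 (deriv g) := hg.deriv'
  have hg'' : ContDiff 𝕜 1 (deriv (deriv g)) := hg'.deriv'
  have deriv_along {h F F' : 𝕜 → E} (hh : Differentiable 𝕜 h) (hhF : ∀ s, h (φ s) = F s)
      (hF : ∀ s, HasDerivAt F (v s • F' s) s) (s : 𝕜) : deriv h (φ s) = F' s :=
    deriv_eq_of_comp_eventuallyEq (hh _) (hφ s) (hv s) (hF s) (.of_forall hhF)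
  have deriv_g : ∀ s, deriv g (φ s) = a • N s :=
    deriv_along (hg.differentiable (by simp)) hgT fun s ↦
      (hT s).congr_deriv (by rw [hκ, mul_smul])
  have deriv2_g : ∀ s, deriv (deriv g) (φ s) = a • (-a • T s + b • B s) :=
    deriv_along (hg'.differentiable (by simp)) deriv_g fun s ↦
      ((hN s).const_smul a).congr_deriv (by rw [hκ, hτ]; module)
  have deriv3_g : ∀ s, deriv (deriv (deriv g)) (φ s) = -(a ^ 2 + b ^ 2) • a • N s :=
    deriv_along (hg''.differentiable (by simp)) deriv2_g fun s ↦
      ((((hT s).const_smul (-a)).add ((hB s).const_smul b)).const_smul a).congr_deriv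
        (by rw [hκ, hτ]; module)
  rw [deriv3_g, deriv_g]

end Reparametrization

theorem helix_tangent_ode_phi_parameter_general {E : Type*} [NormedAddCommGroup E]
    [NormedSpace ℝ E] {T N B g : ℝ → E} {κ τ φ : ℝ → ℝ} {α : ℝ}
    (hT : Differentiable ℝ T) (hN : Differentiable ℝ N) (hB : Differentiable ℝ B)
    (hT' : ∀ s, deriv T s = κ s • N s)
    (hN' : ∀ s, deriv N s = -κ s • T s + τ s • B s)
    (hB' : ∀ s, deriv B s = -τ s • N s)
    (hκ : Continuous κ) (hκ₀ : ∀ s, κ s ≠ 0) (hα : sin α ≠ 0)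
    (hhelix : ∀ s, τ s = cot α * κ s)
    (hφ : ∀ s, φ s = (1 / sin α) * ∫ t in (0 : ℝ)..s, κ t)
    (hg : ContDiff ℝ 3 g) (hgT : ∀ s, g (φ s) = T s) (s : ℝ) :
    deriv (deriv (deriv g)) (φ s) + deriv g (φ s) = 0 := by
  have hφ' (s : ℝ) : HasDerivAt φ (1 / sin α * κ s) s := by
    rw [funext hφ]
    exact (hκ.integral_hasStrictDerivAt 0 s).hasDerivAt.const_mul _
  have curvature_eq (s : ℝ) : κ s = 1 / sin α * κ s * sin α := by field_simp
  have torsion_eq (s : ℝ) : τ s = 1 / sin α * κ s * cos α := by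
    rw [hhelix, cot_eq_cos_div_sin]; ring
  have ode := deriv_deriv_deriv_eq_of_frenet_proportional
    (fun s ↦ hT' s ▸ (hT s).hasDerivAt) (fun s ↦ hN' s ▸ (hN s).hasDerivAt)
    (fun s ↦ hB' s ▸ (hB s).hasDerivAt) hφ'
    (fun s ↦ mul_ne_zero (one_div_ne_zero hα) (hκ₀ s)) curvature_eq torsion_eq hg hgT s
  rw [ode, sin_sq_add_cos_sq, neg_one_smul, neg_add_cancel]

/-- For a general helix with τ = cot α · κ, the tangent vector viewed as a
function of φ = csc α ∫ κ ds satisfies g''' + g' = 0. -/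
theorem helix_tangent_ode_phi_parameter
    (ψ T N B : ℝ → E3) (κ τ : ℝ → ℝ)
    (hψ : ContDiff ℝ (⊤ : ℕ∞) ψ) (hTsm : ContDiff ℝ (⊤ : ℕ∞) T)
    (hNsm : ContDiff ℝ (⊤ : ℕ∞) N) (hBsm : ContDiff ℝ (⊤ : ℕ∞) B)
    (hκsm : ContDiff ℝ (⊤ : ℕ∞) κ) (hτsm : ContDiff ℝ (⊤ : ℕ∞) τ)
    (hT1 : ∀ s, ‖T s‖ = 1) (hN1 : ∀ s, ‖N s‖ = 1) (hB1 : ∀ s, ‖B s‖ = 1)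
    (hTN : ∀ s, ⟪T s, N s⟫ = 0) (hTB : ∀ s, ⟪T s, B s⟫ = 0) (hNB : ∀ s, ⟪N s, B s⟫ = 0)
    (hψT : ∀ s, deriv ψ s = T s)
    (hT' : ∀ s, deriv T s = κ s • N s)
    (hN' : ∀ s, deriv N s = (-(κ s)) • T s + τ s • B s)
    (hB' : ∀ s, deriv B s = (-(τ s)) • N s)
    (hκpos : ∀ s, 0 < κ s)
    (α : ℝ) (hα : α ∈ Set.Ioo (0 : ℝ) π)
    (hhelix : ∀ s, τ s = Real.cot α * κ s)
    (φ : ℝ → ℝ) (hφ : ∀ s, φ s = (1 / Real.sin α) * ∫ t in (0:ℝ)..s, κ t)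
    (g : ℝ → E3) (hg : ContDiff ℝ (⊤ : ℕ∞) g)
    (hgT : ∀ s, g (φ s) = T s) :
    ∀ s : ℝ, deriv (deriv (deriv g)) (φ s) + deriv g (φ s) = 0 := by
  exact helix_tangent_ode_phi_parameter_general (hTsm.differentiable (by simp))
    (hNsm.differentiable (by simp)) (hBsm.differentiable (by simp)) hT' hN' hB' hκsm.continuous
    (fun s ↦ (hκpos s).ne') (sin_pos_of_mem_Ioo hα).ne' hhelix hφ (contDiff_infty.1 hg 3) hgT
end
end

section
/- Let α ∈ (0, π) and let g : ℝ → E³ be a smooth map such that for all x ∈ ℝ: g'''(x) + g'(x) = 0, ‖g(x)‖ = 1, ⟨g(x), e₃⟩ = cos α, and g'(x) ≠ 0. Then there exist ε ∈ ℝ and δ ∈ {−1, 1} such that g(x) = ( sin α · cos(δx + ε), sin α · sin(δx + ε), cos α ) for all x ∈ ℝ. -/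
noncomputable section
open Real
open scoped RealInnerProductSpace

/-!
The equation makes `g + g''` a constant `a`, so `g - a` is a harmonic oscillator and
`g x = a + cos x • u + sin x • v`. Comparing norms at a few values of `x` shows that a curve of
this shape on a sphere centred at the origin is a circle: `u` and `v` are orthogonal, of equal
length, and both orthogonal to `a`. The constant angle with `e₃` makes `u` and `v` horizontal, so
`v` is `u` turned by a quarter in one of the two directions, which gives `δ`, and the polar angle
of `u` is `ε`.
-/

section Oscillator

variable {E : Type*} [NormedAddCommGroup E] [NormedSpace ℝ E]

theorem eq_of_forall_hasDerivAt_zero {f : ℝ → E} (hf : ∀ x, HasDerivAt f 0 x) (x y : ℝ) :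
    f x = f y :=
  is_const_of_deriv_eq_zero (fun z ↦ (hf z).differentiableAt) (fun z ↦ (hf z).deriv) x y

-- Rotating the pair `f x`, `f' x` back by the angle `x` gives a pair independent of `x`.
theorem eq_cos_smul_add_sin_smul {f f' : ℝ → E} (hf : ∀ x, HasDerivAt f (f' x) x)
    (hf' : ∀ x, HasDerivAt f' (-f x) x) (x : ℝ) :
    f x = cos x • f 0 + sin x • f' 0 := by
  have first_const : cos x • f x - sin x • f' x = f 0 := by
    have deriv_zero (y : ℝ) : HasDerivAt (fun y ↦ cos y • f y - sin y • f' y) 0 y :=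
      (((hasDerivAt_cos y).fun_smul (hf y)).fun_sub
        ((hasDerivAt_sin y).fun_smul (hf' y))).congr_deriv (by module)
    simpa using eq_of_forall_hasDerivAt_zero deriv_zero x 0
  have second_const : sin x • f x + cos x • f' x = f' 0 := by
    have deriv_zero (y : ℝ) : HasDerivAt (fun y ↦ sin y • f y + cos y • f' y) 0 y :=
      (((hasDerivAt_sin y).fun_smul (hf y)).fun_add
        ((hasDerivAt_cos y).fun_smul (hf' y))).congr_deriv (by module)
    simpa using eq_of_forall_hasDerivAt_zero deriv_zero x 0
  calc
    f x = (cos x ^ 2 + sin x ^ 2) • f x := by rw [cos_sq_add_sin_sq, one_smul]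
    _ = cos x • (cos x • f x - sin x • f' x) + sin x • (sin x • f x + cos x • f' x) := by module
    _ = cos x • f 0 + sin x • f' 0 := by rw [first_const, second_const]

theorem exists_eq_add_cos_smul_add_sin_smul {g : ℝ → E} (hg : ContDiff ℝ 3 g)
    (hode : ∀ x, deriv (deriv (deriv g)) x + deriv g x = 0) :
    ∃ a u v : E, ∀ x, g x = a + cos x • u + sin x • v := by
  have contDiff_deriv : ContDiff ℝ 2 (deriv g) := hg.deriv'
  have contDiff_deriv_deriv : ContDiff ℝ 1 (deriv (deriv g)) := contDiff_deriv.deriv'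
  have hasDerivAt_g (x : ℝ) : HasDerivAt g (deriv g x) x :=
    (hg.differentiable (by norm_num) x).hasDerivAt
  have hasDerivAt_deriv (x : ℝ) : HasDerivAt (deriv g) (deriv (deriv g) x) x :=
    (contDiff_deriv.differentiable (by norm_num) x).hasDerivAt
  have hasDerivAt_add (x : ℝ) : HasDerivAt (fun y ↦ g y + deriv (deriv g) y) 0 x :=
    ((hasDerivAt_g x).fun_add
      (contDiff_deriv_deriv.differentiable one_ne_zero x).hasDerivAt).congr_deriv
        (by rw [add_comm, hode])
  set a : E := g 0 + deriv (deriv g) 0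
  have add_const (x : ℝ) : g x + deriv (deriv g) x = a :=
    eq_of_forall_hasDerivAt_zero hasDerivAt_add x 0
  have oscillator (x : ℝ) : g x - a = cos x • (g 0 - a) + sin x • deriv g 0 :=
    eq_cos_smul_add_sin_smul (fun y ↦ (hasDerivAt_g y).sub_const a)
      (fun y ↦ (hasDerivAt_deriv y).congr_deriv (by rw [← add_const y]; abel)) x
  exact ⟨a, g 0 - a, deriv g 0, fun x ↦ by rw [add_assoc, ← oscillator, add_sub_cancel]⟩

end Oscillator

section TrigonometricCurve

variable {E : Type*} [NormedAddCommGroup E] [InnerProductSpace ℝ E]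

theorem norm_add_cos_smul_add_sin_smul_sq (a u v : E) (x : ℝ) :
    ‖a + cos x • u + sin x • v‖ ^ 2 =
      ‖a‖ ^ 2 + cos x ^ 2 * ‖u‖ ^ 2 + sin x ^ 2 * ‖v‖ ^ 2
        + 2 * (cos x * ⟪a, u⟫ + sin x * ⟪a, v⟫ + cos x * sin x * ⟪u, v⟫) := by
  simp only [norm_add_sq_real, inner_add_left, inner_smul_left, inner_smul_right, norm_smul,
    mul_pow, norm_eq_abs, sq_abs, conj_trivial]
  ring

variable {a u v : E}

theorem orthogonal_of_norm_add_cos_smul_add_sin_smul_eq {r : ℝ}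
    (h : ∀ x, ‖a + cos x • u + sin x • v‖ = r) :
    ⟪a, u⟫ = 0 ∧ ⟪a, v⟫ = 0 ∧ ⟪u, v⟫ = 0 ∧ ‖u‖ = ‖v‖ ∧ ‖a‖ ^ 2 + ‖u‖ ^ 2 = r ^ 2 := by
  have expand (x : ℝ) := h x ▸ norm_add_cos_smul_add_sin_smul_sq a u v x
  have at_zero := expand 0
  have at_pi := expand π
  have at_pi_div_two := expand (π / 2)
  have at_neg_pi_div_two := expand (-(π / 2))
  have at_pi_div_four := expand (π / 4)
  simp only [cos_zero, sin_zero, cos_pi, sin_pi, cos_neg, sin_neg, cos_pi_div_two, sin_pi_div_two,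
    cos_pi_div_four, sin_pi_div_four]
    at at_zero at_pi at_pi_div_two at_neg_pi_div_two at_pi_div_four
  have inner_au : ⟪a, u⟫ = 0 := by linarith
  have inner_av : ⟪a, v⟫ = 0 := by linarith
  have norm_sq_eq : ‖u‖ ^ 2 = ‖v‖ ^ 2 := by linarith
  have half_sq : (√2 / 2) ^ 2 = 1 / 2 := by norm_num [div_pow]
  refine ⟨inner_au, inner_av, ?_, (sq_eq_sq₀ (norm_nonneg u) (norm_nonneg v)).1 norm_sq_eq,
    by linarith⟩
  rw [inner_au, inner_av, ← sq, half_sq] at at_pi_div_four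
  linarith

theorem inner_eq_of_inner_add_cos_smul_add_sin_smul_eq {e : E} {c : ℝ}
    (h : ∀ x, ⟪a + cos x • u + sin x • v, e⟫ = c) :
    ⟪a, e⟫ = c ∧ ⟪u, e⟫ = 0 ∧ ⟪v, e⟫ = 0 := by
  simp only [inner_add_left, real_inner_smul_left] at h
  have at_zero := h 0
  have at_pi := h π
  have at_pi_div_two := h (π / 2)
  simp only [cos_zero, sin_zero, cos_pi, sin_pi, cos_pi_div_two, sin_pi_div_two]
    at at_zero at_pi at_pi_div_two
  exact ⟨by linarith, by linarith, by linarith⟩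

theorem ne_zero_of_deriv_add_cos_smul_add_sin_smul_ne_zero {x : ℝ} (huv : ‖u‖ = ‖v‖)
    (h : deriv (fun y ↦ a + cos y • u + sin y • v) x ≠ 0) : u ≠ 0 := by
  rintro rfl
  obtain rfl : v = 0 := norm_eq_zero.1 (huv ▸ norm_zero)
  simp at h

end TrigonometricCurve

theorem exists_eq_mul_cos_and_eq_mul_sin {p q r : ℝ} (h : p ^ 2 + q ^ 2 = r ^ 2) :
    ∃ ε : ℝ, p = r * cos ε ∧ q = r * sin ε := by
  rcases eq_or_ne r 0 with rfl | hr
  · exact ⟨0, by nlinarith, by nlinarith⟩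
  · have norm_eq_one : ‖(⟨p / r, q / r⟩ : ℂ)‖ = 1 := by
      rw [← sq_eq_sq₀ (norm_nonneg _) zero_le_one, Complex.sq_norm, Complex.normSq_mk]
      field_simp
      linarith
    obtain ⟨ε, hε⟩ := (Complex.norm_eq_one_iff _).1 norm_eq_one
    have cos_eq : cos ε = p / r := by simpa using congrArg Complex.re hε
    have sin_eq : sin ε = q / r := by simpa using congrArg Complex.im hε
    exact ⟨ε, by rw [cos_eq, mul_div_cancel₀ _ hr], by rw [sin_eq, mul_div_cancel₀ _ hr]⟩

section Coordinates

theorem exists_eq_vec3 (w : E3) : ∃ x y z : ℝ, w = vec3 x y z :=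
  ⟨w 0, w 1, w 2, by ext i; fin_cases i <;> rfl⟩

theorem vec3_add_vec3 (x y z x' y' z' : ℝ) :
    vec3 x y z + vec3 x' y' z' = vec3 (x + x') (y + y') (z + z') := by
  ext i
  fin_cases i <;> rfl

theorem smul_vec3 (c x y z : ℝ) : c • vec3 x y z = vec3 (c * x) (c * y) (c * z) := by
  ext i
  fin_cases i <;> rfl

theorem inner_vec3_vec3 (x y z x' y' z' : ℝ) :
    ⟪vec3 x y z, vec3 x' y' z'⟫ = x * x' + y * y' + z * z' := by
  simp [vec3, PiLp.inner_apply, Fin.sum_univ_three, mul_comm]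

theorem norm_vec3_sq (x y z : ℝ) : ‖vec3 x y z‖ ^ 2 = x ^ 2 + y ^ 2 + z ^ 2 := by
  rw [← real_inner_self_eq_norm_sq, inner_vec3_vec3]
  ring

theorem e₃_eq_vec3 : e₃ = vec3 0 0 1 := by
  ext i
  fin_cases i <;> simp [e₃, vec3]

theorem norm_e₃ : ‖e₃‖ = 1 := by
  simp [e₃]

theorem cross3_e₃_vec3 (x y z : ℝ) : cross3 e₃ (vec3 x y z) = vec3 (-y) x 0 := by
  simp [cross3, e₃, vec3]

end Coordinates

section Horizontal

variable {a u v : E3}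

theorem exists_eq_vec3_of_inner_e₃_eq_zero (hu : ⟪u, e₃⟫ = 0) : ∃ x y : ℝ, u = vec3 x y 0 := by
  obtain ⟨x, y, z, rfl⟩ := exists_eq_vec3 u
  rw [e₃_eq_vec3, inner_vec3_vec3, mul_zero, mul_zero, mul_one, zero_add, zero_add] at hu
  subst hu
  exact ⟨x, y, rfl⟩

theorem norm_cross3_e₃ (hu : ⟪u, e₃⟫ = 0) : ‖cross3 e₃ u‖ = ‖u‖ := by
  obtain ⟨x, y, rfl⟩ := exists_eq_vec3_of_inner_e₃_eq_zero hu
  rw [← sq_eq_sq₀ (norm_nonneg _) (norm_nonneg _), cross3_e₃_vec3, norm_vec3_sq, norm_vec3_sq]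
  ring

-- The expansion of `w` in the orthogonal frame `u`, `e₃ × u`, `e₃`.
theorem norm_sq_smul_eq_add_cross3_e₃ (hu : ⟪u, e₃⟫ = 0) (w : E3) :
    ‖u‖ ^ 2 • w =
      ⟪w, u⟫ • u + ⟪w, cross3 e₃ u⟫ • cross3 e₃ u + (‖u‖ ^ 2 * ⟪w, e₃⟫) • e₃ := by
  obtain ⟨x, y, rfl⟩ := exists_eq_vec3_of_inner_e₃_eq_zero hu
  obtain ⟨x', y', z', rfl⟩ := exists_eq_vec3 w
  rw [cross3_e₃_vec3]
  simp only [e₃_eq_vec3, norm_vec3_sq, inner_vec3_vec3, smul_vec3, vec3_add_vec3]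
  congr 1 <;> ring

theorem exists_eq_smul_cross3_e₃ (hu : ⟪u, e₃⟫ = 0) (hv : ⟪v, e₃⟫ = 0) (huv : ⟪u, v⟫ = 0)
    (hnorm : ‖u‖ = ‖v‖) (hu₀ : u ≠ 0) :
    ∃ δ : ℝ, (δ = -1 ∨ δ = 1) ∧ v = δ • cross3 e₃ u := by
  set δ : ℝ := ⟪v, cross3 e₃ u⟫ / ‖u‖ ^ 2 with δ_def
  have norm_pos : 0 < ‖u‖ := norm_pos_iff.2 hu₀
  have v_eq : v = δ • cross3 e₃ u := by
    have expansion := norm_sq_smul_eq_add_cross3_e₃ hu v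
    rw [real_inner_comm, huv, hv, zero_smul, zero_add, mul_zero, zero_smul, add_zero] at expansion
    rw [δ_def, div_eq_inv_mul, mul_smul, ← expansion, inv_smul_smul₀ (by positivity)]
  have abs_δ : |δ| = 1 := by
    rw [v_eq, norm_smul, norm_cross3_e₃ hu, norm_eq_abs] at hnorm
    exact (mul_eq_right₀ norm_pos.ne').1 hnorm.symm
  exact ⟨δ, (eq_or_eq_neg_of_abs_eq abs_δ).symm, v_eq⟩

theorem eq_inner_e₃_smul_e₃ (hu : ⟪u, e₃⟫ = 0) (hu₀ : u ≠ 0) (hau : ⟪a, u⟫ = 0)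
    (hcross : ⟪a, cross3 e₃ u⟫ = 0) : a = ⟪a, e₃⟫ • e₃ := by
  have expansion := norm_sq_smul_eq_add_cross3_e₃ hu a
  rw [hau, hcross, zero_smul, zero_smul, zero_add, zero_add, mul_smul] at expansion
  exact smul_right_injective E3 (pow_ne_zero 2 (norm_ne_zero_iff.2 hu₀)) expansion

theorem exists_eq_vec3_cos_sin {r : ℝ} (hu : ⟪u, e₃⟫ = 0) (hr : ‖u‖ ^ 2 = r ^ 2) :
    ∃ ε : ℝ, u = vec3 (r * cos ε) (r * sin ε) 0 := by
  obtain ⟨x, y, rfl⟩ := exists_eq_vec3_of_inner_e₃_eq_zero hu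
  rw [norm_vec3_sq, zero_pow two_ne_zero, add_zero] at hr
  obtain ⟨ε, rfl, rfl⟩ := exists_eq_mul_cos_and_eq_mul_sin hr
  exact ⟨ε, rfl⟩

theorem cos_smul_add_sin_smul_cross3_e₃ (r ε x : ℝ) {δ : ℝ} (hδ : δ = -1 ∨ δ = 1) :
    cos x • vec3 (r * cos ε) (r * sin ε) 0
        + sin x • δ • cross3 e₃ (vec3 (r * cos ε) (r * sin ε) 0) =
      vec3 (r * cos (δ * x + ε)) (r * sin (δ * x + ε)) 0 := by
  have cos_eq : cos (δ * x) = cos x := by rcases hδ with rfl | rfl <;> simp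
  have sin_eq : sin (δ * x) = δ * sin x := by rcases hδ with rfl | rfl <;> simp
  simp only [cross3_e₃_vec3, smul_vec3, vec3_add_vec3, cos_add, sin_add, cos_eq, sin_eq]
  congr 1 <;> ring

end Horizontal

theorem helix_tangent_explicit_general
    (α : ℝ) (g : ℝ → E3) (hg : ContDiff ℝ 3 g)
    (hode : ∀ x : ℝ, deriv (deriv (deriv g)) x + deriv g x = 0)
    (hunit : ∀ x : ℝ, ‖g x‖ = 1)
    (hangle : ∀ x : ℝ, ⟪g x, e₃⟫ = Real.cos α)
    (hreg : ∃ x : ℝ, deriv g x ≠ 0) :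
    ∃ ε δ : ℝ, (δ = -1 ∨ δ = 1) ∧ ∀ x : ℝ,
      g x = vec3 (Real.sin α * Real.cos (δ * x + ε))
                 (Real.sin α * Real.sin (δ * x + ε))
                 (Real.cos α) := by
  obtain ⟨a, u, v, hguv⟩ := exists_eq_add_cos_smul_add_sin_smul hg hode
  obtain rfl : g = fun x ↦ a + cos x • u + sin x • v := funext hguv
  obtain ⟨hau, hav, huv, hnorm, hpyth⟩ :=
    orthogonal_of_norm_add_cos_smul_add_sin_smul_eq hunit
  obtain ⟨hae, hue, hve⟩ := inner_eq_of_inner_add_cos_smul_add_sin_smul_eq hangle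
  obtain ⟨x₀, hx₀⟩ := hreg
  have hu₀ : u ≠ 0 := ne_zero_of_deriv_add_cos_smul_add_sin_smul_ne_zero hnorm hx₀
  obtain ⟨δ, hδ, rfl⟩ := exists_eq_smul_cross3_e₃ hue hve huv hnorm hu₀
  have hcross : ⟪a, cross3 e₃ u⟫ = 0 := by rcases hδ with rfl | rfl <;> simpa using hav
  have ha : a = cos α • e₃ := hae ▸ eq_inner_e₃_smul_e₃ hue hu₀ hau hcross
  have hu : ‖u‖ ^ 2 = sin α ^ 2 := by
    rw [ha, norm_smul, norm_e₃, mul_one, norm_eq_abs, sq_abs] at hpyth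
    linarith [sin_sq_add_cos_sq α]
  obtain ⟨ε, rfl⟩ := exists_eq_vec3_cos_sin hue hu
  refine ⟨ε, δ, hδ, fun x ↦ ?_⟩
  rw [hguv, add_assoc, cos_smul_add_sin_smul_cross3_e₃ _ _ _ hδ, ha, e₃_eq_vec3, smul_vec3,
    vec3_add_vec3, mul_zero, mul_one, zero_add, zero_add, add_zero]

/-- A unit solution of g''' + g' = 0 making a constant angle α with e₃ and with
nonvanishing derivative is a circle parameterization of the helix tangent. -/
theorem helix_tangent_explicit
    (α : ℝ) (hα : α ∈ Set.Ioo (0 : ℝ) π)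
    (g : ℝ → E3) (hg : ContDiff ℝ (⊤ : ℕ∞) g)
    (hode : ∀ x : ℝ, deriv (deriv (deriv g)) x + deriv g x = 0)
    (hunit : ∀ x : ℝ, ‖g x‖ = 1)
    (hangle : ∀ x : ℝ, ⟪g x, e₃⟫ = Real.cos α)
    (hreg : ∀ x : ℝ, deriv g x ≠ 0) :
    ∃ ε δ : ℝ, (δ = -1 ∨ δ = 1) ∧ ∀ x : ℝ,
      g x = vec3 (Real.sin α * Real.cos (δ * x + ε))
                 (Real.sin α * Real.sin (δ * x + ε))
                 (Real.cos α) :=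
  helix_tangent_explicit_general α g (contDiff_infty.1 hg 3) hode hunit hangle ⟨0, hreg 0⟩
end
end

section
/- Let ψ : ℝ → E³ be a unit speed curve with Frenet apparatus (T, N, B, κ, τ) with κ(s) > 0 for all s, and let α ∈ (0, π) be such that τ(s) = cot(α)·κ(s) for all s and such that ⟨T(s), e₃⟩ = cos α for all s (the axis of the general helix is e₃). Set φ(s) = (1/ sin α) ∫₀ˢ κ(t) dt. Then there exist ε ∈ ℝ and δ ∈ {−1, 1} such that the position vector of ψ is given in the natural parameter by ψ(s) = ψ(0) + ∫₀ˢ ( sin α · cos(δφ(t) + ε), sin α · sin(δφ(t) + ε), cos α ) dt for all s ∈ ℝ. -/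
noncomputable section
open Real
open scoped RealInnerProductSpace

/-!
Projecting a helix with axis `e₃` along its axis gives a plane curve whose tangent `z` runs on the
circle of radius `sin α` in the complex plane. Since `κ` never vanishes, `N` is orthogonal to `e₃`,
so its projection `n` is still a unit vector, orthogonal to `z`. Hence `n = δ (sin α)⁻¹ i z` with a
sign `δ` that is constant by connectedness. Now `z' = κ n = i δ φ' z`, a linear equation with
solution `z = z(0) exp (i δ φ)`, and integrating the tangent recovers the curve.
-/

theorem eq_exp_sub_smul_of_hasDerivAt {E : Type*} [NormedAddCommGroup E] [NormedSpace ℝ E]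
    [NormedSpace ℂ E] [IsScalarTower ℝ ℂ E] {z : ℝ → E} {θ θ' : ℝ → ℂ}
    (hθ : ∀ s, HasDerivAt θ (θ' s) s) (hz : ∀ s, HasDerivAt z (θ' s • z s) s) (s t : ℝ) :
    z s = Complex.exp (θ s - θ t) • z t := by
  have hderiv (u : ℝ) : HasDerivAt (fun u ↦ Complex.exp (-θ u) • z u) 0 u :=
    ((hθ u).neg.cexp.smul (hz u)).congr_deriv (by module)
  have hconst : Complex.exp (-θ s) • z s = Complex.exp (-θ t) • z t :=
    is_const_of_deriv_eq_zero (fun u ↦ (hderiv u).differentiableAt) (fun u ↦ (hderiv u).deriv) s t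
  rw [sub_eq_add_neg, Complex.exp_add, mul_smul, ← hconst, smul_smul, ← Complex.exp_add,
    add_neg_cancel, Complex.exp_zero, one_smul]

section InnerProductSpace

variable {E : Type*} [NormedAddCommGroup E] [InnerProductSpace ℝ E] {f : ℝ → E} {f' : E} {s : ℝ}

theorem inner_eq_zero_of_hasDerivAt_of_norm_eq {r : ℝ} (hf : HasDerivAt f f' s)
    (hr : ∀ t, ‖f t‖ = r) : ⟪f s, f'⟫ = 0 := by
  have hsq := hf.norm_sq
  simp only [hr] at hsq
  linarith [hsq.unique (hasDerivAt_const s (r ^ 2))]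

theorem inner_eq_zero_of_hasDerivAt_of_inner_eq {a : E} {c : ℝ} (hf : HasDerivAt f f' s)
    (hc : ∀ t, ⟪f t, a⟫ = c) : ⟪f', a⟫ = 0 := by
  have h := hf.inner ℝ (hasDerivAt_const s a)
  simp only [hc, inner_zero_right, zero_add] at h
  exact h.unique (hasDerivAt_const s c)

end InnerProductSpace

open scoped ComplexConjugate in
theorem exists_sign_eq_mul_of_inner_eq_zero {X : Type*} [TopologicalSpace X] [PreconnectedSpace X]
    {z n : X → ℂ} {r : ℝ} (hr : r ≠ 0) (hz : Continuous z) (hn : Continuous n)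
    (hzr : ∀ x, ‖z x‖ = r) (hn1 : ∀ x, ‖n x‖ = 1) (hzn : ∀ x, ⟪z x, n x⟫ = 0) :
    ∃ δ : ℝ, (δ = -1 ∨ δ = 1) ∧ ∀ x, n x = (δ / r : ℝ) * Complex.I * z x := by
  set d : X → ℝ := fun x ↦ (n x * conj (z x)).im / r with hd
  have hprod (x : X) : n x * conj (z x) = (d x * r : ℝ) * Complex.I := by
    have hre : (n x * conj (z x)).re = 0 := by rw [← Complex.inner, hzn]
    apply Complex.ext <;> simp [hd, hr, hre]
  have hsq (x : X) : d x ^ 2 = 1 := by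
    have hnorm : r = ‖d x * r‖ := by simpa [hn1, hzr] using congrArg norm (hprod x)
    have hsq' : d x ^ 2 * r ^ 2 = 1 * r ^ 2 := by
      rw [← mul_pow, ← sq_abs, ← Real.norm_eq_abs, ← hnorm, one_mul]
    exact mul_right_cancel₀ (pow_ne_zero 2 hr) hsq'
  have hnz (x : X) : n x = (d x / r : ℝ) * Complex.I * z x := by
    have hr' : (r : ℂ) ≠ 0 := by exact_mod_cast hr
    have hmul : n x * (r : ℂ) ^ 2 = d x * r * Complex.I * z x := by
      rw [← hzr x, ← Complex.conj_mul', ← mul_assoc, hprod, hzr, Complex.ofReal_mul]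
    push_cast
    field_simp
    apply mul_right_cancel₀ hr'
    linear_combination hmul
  have hdc : Continuous d := by fun_prop
  rcases isPreconnected_univ.eq_one_or_eq_neg_one_of_sq_eq hdc.continuousOn
    (fun x _ ↦ hsq x) with h | h
  · exact ⟨1, .inr rfl, fun x ↦ by rw [hnz, h (Set.mem_univ x), Pi.one_apply]⟩
  · exact ⟨-1, .inl rfl, fun x ↦ by rw [hnz, h (Set.mem_univ x), Pi.neg_apply, Pi.one_apply]⟩

theorem exists_sign_eq_exp_mul_of_norm_eq {z n : ℝ → ℂ} {κ θ : ℝ → ℝ} {r : ℝ} (hr : r ≠ 0)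
    (hzr : ∀ s, ‖z s‖ = r) (hn1 : ∀ s, ‖n s‖ = 1) (hn : Continuous n) (hκ : ∀ s, κ s ≠ 0)
    (hz : ∀ s, HasDerivAt z (κ s • n s) s) (hθ : ∀ s, HasDerivAt θ (κ s / r) s) :
    ∃ δ : ℝ, (δ = -1 ∨ δ = 1) ∧
      ∀ s t, z s = Complex.exp ((δ * (θ s - θ t) : ℝ) * Complex.I) * z t := by
  have hzn (s : ℝ) : ⟪z s, n s⟫ = 0 := by
    have h := inner_eq_zero_of_hasDerivAt_of_norm_eq (hz s) hzr
    rwa [real_inner_smul_right, mul_eq_zero, or_iff_right (hκ s)] at h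
  have hzc : Continuous z := continuous_iff_continuousAt.2 fun s ↦ (hz s).continuousAt
  obtain ⟨δ, hδ, hnz⟩ := exists_sign_eq_mul_of_inner_eq_zero hr hzc hn hzr hn1 hzn
  refine ⟨δ, hδ, fun s t ↦ ?_⟩
  have hθ' (u : ℝ) : HasDerivAt (fun u ↦ ((δ * θ u : ℝ) : ℂ) * Complex.I)
      ((δ * (κ u / r) : ℝ) * Complex.I) u :=
    ((hθ u).const_mul δ).ofReal_comp.mul_const Complex.I
  have hz' (u : ℝ) : HasDerivAt z (((δ * (κ u / r) : ℝ) * Complex.I) • z u) u := by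
    convert hz u using 1
    rw [hnz, Complex.real_smul, smul_eq_mul]
    push_cast
    ring
  rw [eq_exp_sub_smul_of_hasDerivAt hθ' hz' s t, smul_eq_mul, ← sub_mul, ← Complex.ofReal_sub,
    ← mul_sub]

/-- The orthogonal projection of `E3` along `e₃`, with the plane orthogonal to `e₃` identified with
`ℂ` by `(x₁, x₂, 0) ↦ x₁ + i x₂`, so that rotations about the axis become multiplications. -/
def horizontal : E3 →L[ℝ] ℂ :=
  Complex.equivRealProdCLM.symm ∘L
    (EuclideanSpace.proj (𝕜 := ℝ) (0 : Fin 3)).prod (EuclideanSpace.proj (𝕜 := ℝ) (1 : Fin 3))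

theorem horizontal_apply (v : E3) : horizontal v = ⟨v 0, v 1⟩ := rfl

theorem inner_e₃_right (v : E3) : ⟪v, e₃⟫ = v 2 := by
  simp [e₃, EuclideanSpace.inner_single_right]

theorem norm_horizontal_sq (v : E3) : ‖horizontal v‖ ^ 2 = ‖v‖ ^ 2 - ⟪v, e₃⟫ ^ 2 := by
  rw [EuclideanSpace.real_norm_sq_eq, Fin.sum_univ_three, inner_e₃_right, horizontal_apply,
    Complex.sq_norm, Complex.normSq_mk]
  ring

theorem eq_vec3_of_horizontal_eq {v : E3} {r θ : ℝ}
    (h : horizontal v = r * Complex.exp (θ * Complex.I)) :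
    v = vec3 (r * Real.cos θ) (r * Real.sin θ) ⟪v, e₃⟫ := by
  have h0 : v 0 = r * Real.cos θ := by
    simpa [horizontal_apply, Complex.exp_ofReal_mul_I_re] using congrArg Complex.re h
  have h1 : v 1 = r * Real.sin θ := by
    simpa [horizontal_apply, Complex.exp_ofReal_mul_I_im] using congrArg Complex.im h
  ext i
  fin_cases i <;> simp [vec3, h0, h1, inner_e₃_right]

theorem tangent_eq_vec3_of_inner_e₃_eq_cos {T N : ℝ → E3} {κ φ : ℝ → ℝ} {α : ℝ}
    (hsin : 0 < Real.sin α) (hT1 : ∀ s, ‖T s‖ = 1) (hN1 : ∀ s, ‖N s‖ = 1) (hN : Continuous N)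
    (hT : ∀ s, HasDerivAt T (κ s • N s) s) (hκ0 : ∀ s, κ s ≠ 0)
    (haxis : ∀ s, ⟪T s, e₃⟫ = Real.cos α) (hφ : ∀ s, HasDerivAt φ (κ s / Real.sin α) s) :
    ∃ ε δ : ℝ, (δ = -1 ∨ δ = 1) ∧ ∀ s,
      T s = vec3 (Real.sin α * Real.cos (δ * φ s + ε)) (Real.sin α * Real.sin (δ * φ s + ε))
        (Real.cos α) := by
  have hTnorm (s : ℝ) : ‖horizontal (T s)‖ = Real.sin α := by
    rw [← sq_eq_sq₀ (norm_nonneg _) hsin.le, norm_horizontal_sq, hT1, haxis, Real.sin_sq, one_pow]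
  have hNe₃ (s : ℝ) : ⟪N s, e₃⟫ = 0 := by
    have h := inner_eq_zero_of_hasDerivAt_of_inner_eq (hT s) haxis
    rwa [real_inner_smul_left, mul_eq_zero, or_iff_right (hκ0 s)] at h
  have hNnorm (s : ℝ) : ‖horizontal (N s)‖ = 1 := by
    rw [← sq_eq_sq₀ (norm_nonneg _) zero_le_one, norm_horizontal_sq, hN1, hNe₃]
    norm_num
  have hTder (s : ℝ) : HasDerivAt (fun t ↦ horizontal (T t)) (κ s • horizontal (N s)) s := by
    rw [← map_smul]
    exact horizontal.hasFDerivAt.comp_hasDerivAt s (hT s)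
  obtain ⟨δ, hδ, hexp⟩ := exists_sign_eq_exp_mul_of_norm_eq hsin.ne' hTnorm hNnorm
    (horizontal.continuous.comp hN) hκ0 hTder hφ
  refine ⟨Complex.arg (horizontal (T 0)) - δ * φ 0, δ, hδ, fun s ↦ ?_⟩
  have hT0 : horizontal (T 0) =
      Real.sin α * Complex.exp (Complex.arg (horizontal (T 0)) * Complex.I) := by
    rw [← hTnorm 0, Complex.norm_mul_exp_arg_mul_I]
  rw [← haxis s]
  apply eq_vec3_of_horizontal_eq
  have hangle : δ * φ s + (Complex.arg (horizontal (T 0)) - δ * φ 0) =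
      δ * (φ s - φ 0) + Complex.arg (horizontal (T 0)) := by ring
  rw [hexp s 0, hangle, Complex.ofReal_add, add_mul, Complex.exp_add, mul_left_comm, ← hT0]

theorem helix_position_vector_natural_general {ψ T N : ℝ → E3} {κ : ℝ → ℝ}
    (hψT : ∀ s, HasDerivAt ψ (T s) s) (hT' : ∀ s, HasDerivAt T (κ s • N s) s)
    (hN : Continuous N) (hκ : Continuous κ) (hT1 : ∀ s, ‖T s‖ = 1) (hN1 : ∀ s, ‖N s‖ = 1)
    (hκ0 : ∀ s, κ s ≠ 0) {α : ℝ} (hα : α ∈ Set.Ioo (0 : ℝ) π)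
    (haxis : ∀ s, ⟪T s, e₃⟫ = Real.cos α)
    {φ : ℝ → ℝ} (hφ : ∀ s, φ s = (1 / Real.sin α) * ∫ t in (0 : ℝ)..s, κ t) :
    ∃ ε δ : ℝ, (δ = -1 ∨ δ = 1) ∧ ∀ s : ℝ,
      ψ s = ψ 0 + ∫ t in (0 : ℝ)..s,
        vec3 (Real.sin α * Real.cos (δ * φ t + ε))
             (Real.sin α * Real.sin (δ * φ t + ε))
             (Real.cos α) := by
  have hφ' (s : ℝ) : HasDerivAt φ (κ s / Real.sin α) s := by
    rw [funext hφ]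
    exact ((hκ.integral_hasStrictDerivAt 0 s).hasDerivAt.const_mul _).congr_deriv
      (one_div_mul_eq_div _ _)
  obtain ⟨ε, δ, hδ, hT⟩ := tangent_eq_vec3_of_inner_e₃_eq_cos (Real.sin_pos_of_mem_Ioo hα)
    hT1 hN1 hN hT' hκ0 haxis hφ'
  have hTc : Continuous T := continuous_iff_continuousAt.2 fun s ↦ (hT' s).continuousAt
  refine ⟨ε, δ, hδ, fun s ↦ ?_⟩
  simp only [← hT]
  rw [intervalIntegral.integral_eq_sub_of_hasDerivAt (fun t _ ↦ hψT t) (hTc.intervalIntegrable 0 s),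
    add_sub_cancel]

/-- The position vector of a general helix with axis e₃ in the natural parameter. -/
theorem helix_position_vector_natural
    (ψ T N B : ℝ → E3) (κ τ : ℝ → ℝ)
    (hψ : ContDiff ℝ (⊤ : ℕ∞) ψ) (hTsm : ContDiff ℝ (⊤ : ℕ∞) T)
    (hNsm : ContDiff ℝ (⊤ : ℕ∞) N) (hBsm : ContDiff ℝ (⊤ : ℕ∞) B)
    (hκsm : ContDiff ℝ (⊤ : ℕ∞) κ) (hτsm : ContDiff ℝ (⊤ : ℕ∞) τ)
    (hT1 : ∀ s, ‖T s‖ = 1) (hN1 : ∀ s, ‖N s‖ = 1) (hB1 : ∀ s, ‖B s‖ = 1)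
    (hTN : ∀ s, ⟪T s, N s⟫ = 0) (hTB : ∀ s, ⟪T s, B s⟫ = 0) (hNB : ∀ s, ⟪N s, B s⟫ = 0)
    (hψT : ∀ s, deriv ψ s = T s)
    (hT' : ∀ s, deriv T s = κ s • N s)
    (hN' : ∀ s, deriv N s = (-(κ s)) • T s + τ s • B s)
    (hB' : ∀ s, deriv B s = (-(τ s)) • N s)
    (hκpos : ∀ s, 0 < κ s)
    (α : ℝ) (hα : α ∈ Set.Ioo (0 : ℝ) π)
    (hhelix : ∀ s, τ s = Real.cot α * κ s)
    (haxis : ∀ s, ⟪T s, e₃⟫ = Real.cos α)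
    (φ : ℝ → ℝ) (hφ : ∀ s, φ s = (1 / Real.sin α) * ∫ t in (0:ℝ)..s, κ t) :
    ∃ ε δ : ℝ, (δ = -1 ∨ δ = 1) ∧ ∀ s : ℝ,
      ψ s = ψ 0 + ∫ t in (0:ℝ)..s,
        vec3 (Real.sin α * Real.cos (δ * φ t + ε))
             (Real.sin α * Real.sin (δ * φ t + ε))
             (Real.cos α) :=
  helix_position_vector_natural_general
    (fun s ↦ hψT s ▸ (hψ.differentiable (by simp) s).hasDerivAt)
    (fun s ↦ hT' s ▸ (hTsm.differentiable (by simp) s).hasDerivAt)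
    hNsm.continuous hκsm.continuous hT1 hN1 (fun s ↦ (hκpos s).ne') hα haxis hφ
end
end

section
/- (Fundamental existence theorem for space curves.) Let κ, τ : ℝ → ℝ be smooth functions with κ(s) > 0 for all s. Then there exists a smooth unit speed curve ψ : ℝ → E³ such that for all s ∈ ℝ: ‖ψ'(s)‖ = 1, ‖ψ''(s)‖ = κ(s), and ⟨ψ'(s) × ψ''(s), ψ'''(s)⟩ / ‖ψ''(s)‖² = τ(s). -/
noncomputable section
open Real
open scoped RealInnerProductSpace

/-!
Writing the frame `T`, `N`, `B` as the rows of a matrix `F`, the Frenet–Serret equations become a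
linear equation `F' = A F` with `A` skew-symmetric. It has a solution on all of `ℝ` with `F 0 = 1`,
because a Picard operator with respect to a time-dependent Lipschitz constant is a contraction for a
suitably weighted sup norm. Skew-symmetry makes `Fᵀ F` constant, hence `F` orthogonal, and `det F`
is continuous with values `±1`, hence `1`. Integrating the first row `T` gives a curve whose
derivatives are computed from the Frenet–Serret equations.
-/

section GlobalExistence
open ODE Function
open scoped NNReal BoundedContinuousFunction

variable {E : Type*} [NormedAddCommGroup E] [NormedSpace ℝ E]

/-- A two-sided, differentiable variant of Bielecki's weight `exp |∫ w|`: in the sup norm weighted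
by its inverse, the Picard operator of a vector field that is `w t / 2`-Lipschitz at time `t` is a
contraction on the whole real line. -/
def coshWeight (w : ℝ → ℝ) (t₀ t : ℝ) : ℝ := cosh (∫ s in t₀..t, w s)

lemma one_le_coshWeight (w : ℝ → ℝ) (t₀ t : ℝ) : 1 ≤ coshWeight w t₀ t := one_le_cosh _

lemma coshWeight_pos (w : ℝ → ℝ) (t₀ t : ℝ) : 0 < coshWeight w t₀ t := cosh_pos _

lemma continuous_coshWeight {w : ℝ → ℝ} (hw : Continuous w) (t₀ : ℝ) :
    Continuous (coshWeight w t₀) :=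
  continuous_cosh.comp
    (intervalIntegral.continuous_primitive (fun _ _ ↦ hw.intervalIntegrable _ _) t₀)

lemma integral_mul_coshWeight {w : ℝ → ℝ} (hw : Continuous w) (t₀ t : ℝ) :
    ∫ s in t₀..t, w s * coshWeight w t₀ s = sinh (∫ s in t₀..t, w s) := by
  have hderiv (s : ℝ) :
      HasDerivAt (fun r ↦ sinh (∫ u in t₀..r, w u)) (w s * coshWeight w t₀ s) s := by
    simpa only [mul_comm, coshWeight] using (hw.integral_hasStrictDerivAt t₀ s).hasDerivAt.sinh
  rw [intervalIntegral.integral_eq_sub_of_hasDerivAt (fun s _ ↦ hderiv s)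
    ((hw.mul (continuous_coshWeight hw t₀)).intervalIntegrable _ _)]
  simp

lemma norm_integral_le_mul_coshWeight {w : ℝ → ℝ} (hw : Continuous w) {f : ℝ → E} {C : ℝ}
    (hC : 0 ≤ C) {t₀ : ℝ} (hf : ∀ s, ‖f s‖ ≤ C * (w s * coshWeight w t₀ s)) (t : ℝ) :
    ‖∫ s in t₀..t, f s‖ ≤ C * coshWeight w t₀ t := by
  have hbound : Continuous fun s ↦ C * (w s * coshWeight w t₀ s) :=
    continuous_const.mul (hw.mul (continuous_coshWeight hw t₀))
  calc ‖∫ s in t₀..t, f s‖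
      ≤ |∫ s in t₀..t, C * (w s * coshWeight w t₀ s)| :=
        intervalIntegral.norm_integral_le_abs_of_norm_le (.of_forall hf)
          (hbound.intervalIntegrable _ _)
    _ = C * |sinh (∫ s in t₀..t, w s)| := by
        rw [intervalIntegral.integral_const_mul, integral_mul_coshWeight hw, abs_mul,
          abs_of_nonneg hC]
    _ ≤ C * coshWeight w t₀ t := by
        gcongr
        rw [abs_sinh, coshWeight, ← cosh_abs]
        exact (sinh_lt_cosh _).le

variable {v : ℝ → E → E} {w : ℝ → ℝ} {t₀ : ℝ} {x₀ : E}

lemma continuous_picard (hv : Continuous ↿v) {x : ℝ → E} (hx : Continuous x) :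
    Continuous (picard v t₀ x₀ x) :=
  continuous_const.add <| intervalIntegral.continuous_primitive
    (fun _ _ ↦ (hv.comp (continuous_id.prodMk hx)).intervalIntegrable _ _) t₀

lemma isIntegralCurve_of_picard_eq [CompleteSpace E] (hv : Continuous ↿v) {x : ℝ → E}
    (hx : Continuous x) (hfix : picard v t₀ x₀ x = x) : IsIntegralCurve x v := fun t ↦ by
  have hvx : Continuous fun s ↦ v s (x s) := hv.comp (continuous_id.prodMk hx)
  have hderiv := (hvx.integral_hasStrictDerivAt t₀ t).hasDerivAt.const_add x₀
  exact hderiv.congr_of_eventuallyEq (.of_eq hfix.symm)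

lemma norm_picard_sub_picard_le (hv : Continuous ↿v) (hw : Continuous w)
    (hlip : ∀ t x y, ‖v t x - v t y‖ ≤ w t / 2 * ‖x - y‖) (hw₀ : ∀ t, 0 ≤ w t) {x y : ℝ → E}
    (hx : Continuous x) (hy : Continuous y) {C : ℝ} (hC : 0 ≤ C)
    (hxy : ∀ t, ‖x t - y t‖ ≤ C * coshWeight w t₀ t) (t : ℝ) :
    ‖picard v t₀ x₀ x t - picard v t₀ x₀ y t‖ ≤ C / 2 * coshWeight w t₀ t := by
  have hvx : Continuous fun s ↦ v s (x s) := hv.comp (continuous_id.prodMk hx)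
  have hvy : Continuous fun s ↦ v s (y s) := hv.comp (continuous_id.prodMk hy)
  rw [picard_apply, picard_apply, add_sub_add_left_eq_sub, ← intervalIntegral.integral_sub
    (hvx.intervalIntegrable _ _) (hvy.intervalIntegrable _ _)]
  refine norm_integral_le_mul_coshWeight hw (by positivity) (fun s ↦ ?_) t
  calc ‖v s (x s) - v s (y s)‖
      ≤ w s / 2 * ‖x s - y s‖ := hlip s _ _
    _ ≤ w s / 2 * (C * coshWeight w t₀ s) := by
        gcongr
        exacts [div_nonneg (hw₀ s) zero_le_two, hxy s]
    _ = C / 2 * (w s * coshWeight w t₀ s) := by ring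

lemma norm_picard_zero_le (hw : Continuous w) (hv₀ : ∀ t, ‖v t 0‖ ≤ w t) (t : ℝ) :
    ‖picard v t₀ x₀ 0 t‖ ≤ (‖x₀‖ + 1) * coshWeight w t₀ t := by
  have hintegral : ‖∫ s in t₀..t, v s 0‖ ≤ 1 * coshWeight w t₀ t :=
    norm_integral_le_mul_coshWeight hw zero_le_one (fun s ↦ by
      rw [one_mul]
      exact (hv₀ s).trans (le_mul_of_one_le_right ((norm_nonneg _).trans (hv₀ s))
        (one_le_coshWeight w t₀ s))) t
  calc ‖picard v t₀ x₀ 0 t‖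
      ≤ ‖x₀‖ + ‖∫ s in t₀..t, v s 0‖ := norm_add_le _ _
    _ ≤ ‖x₀‖ * coshWeight w t₀ t + 1 * coshWeight w t₀ t := by
        gcongr
        exact le_mul_of_one_le_right (norm_nonneg x₀) (one_le_coshWeight w t₀ t)
    _ = (‖x₀‖ + 1) * coshWeight w t₀ t := by ring

lemma norm_picard_le (hv : Continuous ↿v) (hw : Continuous w)
    (hlip : ∀ t x y, ‖v t x - v t y‖ ≤ w t / 2 * ‖x - y‖) (hv₀ : ∀ t, ‖v t 0‖ ≤ w t) {x : ℝ → E}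
    (hx : Continuous x) {C : ℝ} (hC : 0 ≤ C) (hxC : ∀ t, ‖x t‖ ≤ C * coshWeight w t₀ t) (t : ℝ) :
    ‖picard v t₀ x₀ x t‖ ≤ (‖x₀‖ + 1 + C / 2) * coshWeight w t₀ t := by
  have hsub := norm_picard_sub_picard_le (x₀ := x₀) (y := 0) hv hw hlip
    (fun s ↦ (norm_nonneg _).trans (hv₀ s)) hx continuous_const hC (by simpa using hxC) t
  calc ‖picard v t₀ x₀ x t‖
      ≤ ‖picard v t₀ x₀ 0 t‖ + ‖picard v t₀ x₀ x t - picard v t₀ x₀ 0 t‖ :=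
        norm_le_norm_add_norm_sub' _ _
    _ ≤ (‖x₀‖ + 1) * coshWeight w t₀ t + C / 2 * coshWeight w t₀ t :=
        add_le_add (norm_picard_zero_le hw hv₀ t) hsub
    _ = (‖x₀‖ + 1 + C / 2) * coshWeight w t₀ t := by ring

/-- The Picard operator conjugated by multiplication with the weight `coshWeight w t₀`. It acts on
bounded functions, where the contraction principle applies, and its fixed points correspond to those
of the Picard operator. -/
def weightedPicard (v : ℝ → E → E) (w : ℝ → ℝ) (t₀ : ℝ) (x₀ : E) (y : ℝ → E) (t : ℝ) : E :=
  (coshWeight w t₀ t)⁻¹ • picard v t₀ x₀ (coshWeight w t₀ • y) t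

lemma norm_inv_coshWeight_smul_le {x : E} {C t : ℝ} (hx : ‖x‖ ≤ C * coshWeight w t₀ t) :
    ‖(coshWeight w t₀ t)⁻¹ • x‖ ≤ C := by
  have hpos := coshWeight_pos w t₀ t
  rwa [norm_smul, norm_inv, norm_of_nonneg hpos.le, inv_mul_le_iff₀ hpos, mul_comm]

lemma norm_coshWeight_smul_le (y : ℝ →ᵇ E) (t : ℝ) :
    ‖(coshWeight w t₀ • ⇑y) t‖ ≤ ‖y‖ * coshWeight w t₀ t := by
  have hpos := coshWeight_pos w t₀ t
  rw [Pi.smul_apply', norm_smul, norm_of_nonneg hpos.le, mul_comm]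
  exact mul_le_mul_of_nonneg_right (y.norm_coe_le_norm t) hpos.le

lemma norm_weightedPicard_le (hv : Continuous ↿v) (hw : Continuous w)
    (hlip : ∀ t x y, ‖v t x - v t y‖ ≤ w t / 2 * ‖x - y‖) (hv₀ : ∀ t, ‖v t 0‖ ≤ w t)
    (y : ℝ →ᵇ E) (t : ℝ) : ‖weightedPicard v w t₀ x₀ y t‖ ≤ ‖x₀‖ + 1 + ‖y‖ / 2 :=
  norm_inv_coshWeight_smul_le <| norm_picard_le hv hw hlip hv₀
    ((continuous_coshWeight hw t₀).smul y.continuous) (norm_nonneg y) (norm_coshWeight_smul_le y) t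

lemma norm_weightedPicard_sub_le (hv : Continuous ↿v) (hw : Continuous w)
    (hlip : ∀ t x y, ‖v t x - v t y‖ ≤ w t / 2 * ‖x - y‖) (hw₀ : ∀ t, 0 ≤ w t)
    (y z : ℝ →ᵇ E) (t : ℝ) :
    ‖weightedPicard v w t₀ x₀ y t - weightedPicard v w t₀ x₀ z t‖ ≤ ‖y - z‖ / 2 := by
  have hg := continuous_coshWeight hw t₀
  rw [weightedPicard, weightedPicard, ← smul_sub]
  refine norm_inv_coshWeight_smul_le <| norm_picard_sub_picard_le hv hw hlip hw₀
    (hg.smul y.continuous) (hg.smul z.continuous) (norm_nonneg (y - z)) (fun s ↦ ?_) t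
  simpa only [Pi.smul_apply', BoundedContinuousFunction.coe_sub, Pi.sub_apply, smul_sub] using
    norm_coshWeight_smul_le (y - z) s

lemma exists_weightedPicard_eq [CompleteSpace E] (hv : Continuous ↿v) (hw : Continuous w)
    (hlip : ∀ t x y, ‖v t x - v t y‖ ≤ w t / 2 * ‖x - y‖) (hv₀ : ∀ t, ‖v t 0‖ ≤ w t)
    (t₀ : ℝ) (x₀ : E) : ∃ y : ℝ →ᵇ E, weightedPicard v w t₀ x₀ y = y := by
  have hcont : ∀ y : ℝ →ᵇ E, Continuous (weightedPicard v w t₀ x₀ y) := fun y ↦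
    have hg := continuous_coshWeight hw t₀
    (hg.inv₀ fun t ↦ (coshWeight_pos w t₀ t).ne').smul
      (continuous_picard hv (hg.smul y.continuous))
  let Φ : (ℝ →ᵇ E) → (ℝ →ᵇ E) := fun y ↦ .ofNormedAddCommGroup _ (hcont y) _
    (norm_weightedPicard_le hv hw hlip hv₀ y)
  have hΦ : ContractingWith (1 / 2) Φ := by
    refine ⟨by norm_num, .of_dist_le_mul fun y z ↦ ?_⟩
    have hhalf : ((1 / 2 : ℝ≥0) : ℝ) * dist y z = ‖y - z‖ / 2 := by
      rw [dist_eq_norm, NNReal.coe_div, NNReal.coe_one, NNReal.coe_ofNat, one_div_mul_eq_div]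
    rw [hhalf, dist_eq_norm, BoundedContinuousFunction.norm_le (by positivity)]
    exact norm_weightedPicard_sub_le hv hw hlip (fun s ↦ (norm_nonneg _).trans (hv₀ s)) y z
  exact ⟨hΦ.fixedPoint, congrArg DFunLike.coe hΦ.fixedPoint_isFixedPt⟩

lemma picard_coshWeight_smul_eq {y : ℝ → E} (hy : weightedPicard v w t₀ x₀ y = y) :
    picard v t₀ x₀ (coshWeight w t₀ • y) = coshWeight w t₀ • y := by
  funext t
  rw [Pi.smul_apply', ← congrFun hy t, weightedPicard, smul_inv_smul₀ (coshWeight_pos w t₀ t).ne']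

theorem exists_isIntegralCurve_of_lipschitzWith [CompleteSpace E] {K : ℝ → ℝ≥0}
    (hv : Continuous ↿v) (hK : Continuous K) (hlip : ∀ t, LipschitzWith (K t) (v t))
    (t₀ : ℝ) (x₀ : E) : ∃ x : ℝ → E, x t₀ = x₀ ∧ IsIntegralCurve x v := by
  have hv_zero : Continuous fun t ↦ ‖v t 0‖ :=
    (hv.comp (continuous_id.prodMk continuous_const)).norm
  let w : ℝ → ℝ := fun t ↦ 2 * (K t + ‖v t 0‖)
  have hw : Continuous w := continuous_const.mul ((NNReal.continuous_coe.comp hK).add hv_zero)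
  have hw_lip : ∀ t x y, ‖v t x - v t y‖ ≤ w t / 2 * ‖x - y‖ := fun t x y ↦
    ((hlip t).norm_sub_le x y).trans <| by
      gcongr
      linarith [norm_nonneg (v t 0)]
  have hw_zero : ∀ t, ‖v t 0‖ ≤ w t := fun t ↦ by linarith [norm_nonneg (v t 0), (K t).coe_nonneg]
  obtain ⟨y, hy⟩ := exists_weightedPicard_eq hv hw hw_lip hw_zero t₀ x₀
  have hfix := picard_coshWeight_smul_eq hy
  exact ⟨coshWeight w t₀ • y, by rw [← hfix, picard_apply₀],
    isIntegralCurve_of_picard_eq hv ((continuous_coshWeight hw t₀).smul y.continuous) hfix⟩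

end GlobalExistence

section SkewAdjoint

variable {R : Type*} [NormedRing R] [NormedAlgebra ℝ R]

lemma exists_isIntegralCurve_mul_left [CompleteSpace R] {A : ℝ → R} (hA : Continuous A)
    (t₀ : ℝ) (x₀ : R) : ∃ F : ℝ → R, F t₀ = x₀ ∧ IsIntegralCurve F (fun t X ↦ A t * X) :=
  exists_isIntegralCurve_of_lipschitzWith
    ((hA.comp continuous_fst).mul continuous_snd) hA.nnnorm
    (fun t ↦ .of_dist_le_mul fun X Y ↦ by
      rw [dist_eq_norm, dist_eq_norm, ← mul_sub]
      exact norm_mul_le _ _) t₀ x₀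

lemma star_mul_self_eq_of_isIntegralCurve [StarRing R] [StarModule ℝ R] [ContinuousStar R]
    {A F : ℝ → R} (hA : ∀ t, A t ∈ skewAdjoint R) (hF : IsIntegralCurve F (fun t X ↦ A t * X))
    (t t₀ : ℝ) : star (F t) * F t = star (F t₀) * F t₀ := by
  have hderiv : ∀ s, HasDerivAt (fun r ↦ star (F r) * F r) 0 s := fun s ↦ by
    convert (hF s).star.fun_mul (hF s) using 1
    rw [star_mul, skewAdjoint.mem_iff.mp (hA s)]
    noncomm_ring
  exact is_const_of_deriv_eq_zero (fun s ↦ (hderiv s).differentiableAt)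
    (fun s ↦ (hderiv s).deriv) t t₀

open scoped Matrix.Norms.L2Operator

variable {n : Type*} [Fintype n] [DecidableEq n]

lemma mem_specialOrthogonalGroup_of_isIntegralCurve {A F : ℝ → Matrix n n ℝ}
    (hA : ∀ t, A t ∈ skewAdjoint (Matrix n n ℝ)) (hF : IsIntegralCurve F (fun t X ↦ A t * X))
    {t₀ : ℝ} (h₀ : F t₀ = 1) (t : ℝ) : F t ∈ Matrix.specialOrthogonalGroup n ℝ := by
  have horth : ∀ s, (F s).transpose * F s = 1 := fun s ↦ by
    simpa [h₀, Matrix.star_eq_conjTranspose] using star_mul_self_eq_of_isIntegralCurve hA hF s t₀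
  have hdet_sq : ∀ s, (F s).det ^ 2 = 1 := fun s ↦ by
    simpa [sq] using congrArg Matrix.det (horth s)
  refine Matrix.mem_specialOrthogonalGroup_iff.mpr
    ⟨(Matrix.mem_orthogonalGroup_iff' n ℝ).mpr (horth t), ?_⟩
  rcases isPreconnected_univ.eq_one_or_eq_neg_one_of_sq_eq hF.continuous.matrix_det.continuousOn
    (fun s _ ↦ hdet_sq s) with hdet | hdet
  · exact hdet (Set.mem_univ t)
  · have hdet_t₀ : (F t₀).det = -1 := hdet (Set.mem_univ t₀)
    norm_num [h₀] at hdet_t₀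

end SkewAdjoint

section MatrixRows
open scoped Matrix

variable {m n : Type*} [Fintype n]

lemma hasDerivAt_toLp_row [Finite m] {F : ℝ → Matrix m n ℝ} {F' : Matrix m n ℝ} {t : ℝ}
    (hF : HasDerivAt F F' t) (i : m) :
    HasDerivAt (fun s ↦ WithLp.toLp 2 (F s i)) (WithLp.toLp 2 (F' i)) t :=
  have := Fintype.ofFinite m
  (PiLp.continuousLinearEquiv 2 ℝ fun _ : n ↦ ℝ).symm.hasFDerivAt.comp_hasDerivAt t
    (hasDerivAt_pi.mp hF i)

lemma orthonormal_toLp_row [DecidableEq m] {F : Matrix m n ℝ} (hF : F * Fᵀ = 1) :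
    Orthonormal ℝ fun i ↦ WithLp.toLp 2 (F i) := by
  rw [orthonormal_iff_ite]
  intro i j
  calc ⟪WithLp.toLp 2 (F i), WithLp.toLp 2 (F j)⟫
      = (F * Fᵀ) j i := by
        simp [EuclideanSpace.inner_eq_star_dotProduct, Matrix.mul_apply, dotProduct]
    _ = if i = j then 1 else 0 := by simp only [hF, Matrix.one_apply, eq_comm]

end MatrixRows

lemma inner_cross3_eq_det (u v w : E3) :
    ⟪cross3 u v, w⟫ = Matrix.det ![u.ofLp, v.ofLp, w.ofLp] := by
  rw [← triple_product_eq_det, triple_product_permutation, triple_product_permutation]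
  rfl

lemma inner_cross3_self_left (u v : E3) : ⟪cross3 u v, u⟫ = 0 := by
  rw [inner_cross3_eq_det]
  exact Matrix.det_zero_of_row_eq (i := 0) (j := 2) (by decide) rfl

lemma inner_cross3_self_right (u v : E3) : ⟪cross3 u v, v⟫ = 0 := by
  rw [inner_cross3_eq_det]
  exact Matrix.det_zero_of_row_eq (i := 1) (j := 2) (by decide) rfl

lemma cross3_smul_right (c : ℝ) (u v : E3) : cross3 u (c • v) = c • cross3 u v :=
  WithLp.ofLp_injective 2 ((crossProduct u.ofLp).map_smul c v.ofLp)

/-- `T`, `N`, `B` form a positively oriented orthonormal frame along `ℝ` which satisfies the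
Frenet–Serret equations with curvature `κ` and torsion `τ`; given orthonormality, the condition
`inner_cross3` says that `T × N = B`. -/
structure IsFrenetFrame (κ τ : ℝ → ℝ) (T N B : ℝ → E3) : Prop where
  hasDerivAt_tangent : ∀ s, HasDerivAt T (κ s • N s) s
  hasDerivAt_normal : ∀ s, HasDerivAt N (-κ s • T s + τ s • B s) s
  hasDerivAt_binormal : ∀ s, HasDerivAt B (-τ s • N s) s
  orthonormal : ∀ s, Orthonormal ℝ ![T s, N s, B s]
  inner_cross3 : ∀ s, ⟪cross3 (T s) (N s), B s⟫ = 1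

section FrenetFrame
open scoped Matrix.Norms.L2Operator

/-- The coefficient matrix of the Frenet–Serret equations: the matrix with rows `T`, `N`, `B` has
derivative `frenetMatrix κ τ` times itself. -/
def frenetMatrix (κ τ : ℝ) : Matrix (Fin 3) (Fin 3) ℝ :=
  !![0, κ, 0; -κ, 0, τ; 0, -τ, 0]

lemma continuous_frenetMatrix {κ τ : ℝ → ℝ} (hκ : Continuous κ) (hτ : Continuous τ) :
    Continuous fun s ↦ frenetMatrix (κ s) (τ s) := by
  have hrow₀ : Continuous fun s ↦ ![0, κ s, 0] := by fun_prop
  have hrow₁ : Continuous fun s ↦ ![-κ s, 0, τ s] := by fun_prop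
  have hrow₂ : Continuous fun s ↦ ![0, -τ s, 0] := by fun_prop
  refine continuous_pi fun i ↦ ?_
  fin_cases i
  exacts [hrow₀, hrow₁, hrow₂]

lemma frenetMatrix_mem_skewAdjoint (κ τ : ℝ) :
    frenetMatrix κ τ ∈ skewAdjoint (Matrix (Fin 3) (Fin 3) ℝ) := by
  rw [skewAdjoint.mem_iff]
  ext i j
  fin_cases i <;> fin_cases j <;> simp [frenetMatrix]

lemma toLp_frenetMatrix_mul (κ τ : ℝ) (F : Matrix (Fin 3) (Fin 3) ℝ) (i : Fin 3) :
    WithLp.toLp 2 ((frenetMatrix κ τ * F) i) =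
      ![κ • WithLp.toLp 2 (F 1), -κ • WithLp.toLp 2 (F 0) + τ • WithLp.toLp 2 (F 2),
        -τ • WithLp.toLp 2 (F 1)] i := by
  ext j
  fin_cases i <;> simp [frenetMatrix, Matrix.mul_apply, Fin.sum_univ_three]

theorem exists_isFrenetFrame {κ τ : ℝ → ℝ} (hκ : Continuous κ) (hτ : Continuous τ) :
    ∃ T N B : ℝ → E3, IsFrenetFrame κ τ T N B := by
  obtain ⟨F, hF₀, hF⟩ := exists_isIntegralCurve_mul_left (continuous_frenetMatrix hκ hτ) 0 1
  have hSO : ∀ s, F s ∈ Matrix.specialOrthogonalGroup (Fin 3) ℝ :=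
    mem_specialOrthogonalGroup_of_isIntegralCurve
      (fun s ↦ frenetMatrix_mem_skewAdjoint (κ s) (τ s)) hF hF₀
  have hrow : ∀ i s, HasDerivAt (fun r ↦ WithLp.toLp 2 (F r i)) _ s := fun i s ↦
    toLp_frenetMatrix_mul (κ s) (τ s) (F s) i ▸ hasDerivAt_toLp_row (hF s) i
  refine ⟨fun s ↦ WithLp.toLp 2 (F s 0), fun s ↦ WithLp.toLp 2 (F s 1),
    fun s ↦ WithLp.toLp 2 (F s 2), hrow 0, hrow 1, hrow 2, fun s ↦ ?_, fun s ↦ ?_⟩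
  · convert orthonormal_toLp_row ((Matrix.mem_orthogonalGroup_iff _ _).mp (hSO s).1) using 1
    funext i
    fin_cases i <;> rfl
  · rw [inner_cross3_eq_det, ← (hSO s).2]
    congr 1

end FrenetFrame

lemma contDiff_succ_of_hasDerivAt {E : Type*} [NormedAddCommGroup E] [NormedSpace ℝ E]
    {f f' : ℝ → E} {n : ℕ∞} (hf : ∀ t, HasDerivAt f (f' t) t) (hf' : ContDiff ℝ n f') :
    ContDiff ℝ (n + 1) f :=
  contDiff_succ_iff_deriv.mpr ⟨fun t ↦ (hf t).differentiableAt, by simp,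
    (funext fun t ↦ (hf t).deriv : deriv f = f') ▸ hf'⟩

namespace IsFrenetFrame

variable {κ τ : ℝ → ℝ} {T N B : ℝ → E3}

lemma contDiff_nat (h : IsFrenetFrame κ τ T N B) {n : ℕ} (hκ : ContDiff ℝ n κ)
    (hτ : ContDiff ℝ n τ) : ContDiff ℝ n T ∧ ContDiff ℝ n N ∧ ContDiff ℝ n B := by
  induction n with
  | zero =>
    simp only [Nat.cast_zero, contDiff_zero, continuous_iff_continuousAt]
    exact ⟨fun s ↦ (h.hasDerivAt_tangent s).continuousAt,
      fun s ↦ (h.hasDerivAt_normal s).continuousAt, fun s ↦ (h.hasDerivAt_binormal s).continuousAt⟩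
  | succ k ih =>
    have hk : (k : WithTop ℕ∞) ≤ (k + 1 : ℕ) := by exact_mod_cast k.le_succ
    have hκk : ContDiff ℝ k κ := hκ.of_le hk
    have hτk : ContDiff ℝ k τ := hτ.of_le hk
    obtain ⟨hT, hN, hB⟩ := ih hκk hτk
    exact ⟨contDiff_succ_of_hasDerivAt (n := k) h.hasDerivAt_tangent (hκk.smul hN),
      contDiff_succ_of_hasDerivAt (n := k) h.hasDerivAt_normal
        ((hκk.neg.smul hT).add (hτk.smul hB)),
      contDiff_succ_of_hasDerivAt (n := k) h.hasDerivAt_binormal (hτk.neg.smul hN)⟩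

lemma contDiff_tangent (h : IsFrenetFrame κ τ T N B) (hκ : ContDiff ℝ (⊤ : ℕ∞) κ)
    (hτ : ContDiff ℝ (⊤ : ℕ∞) τ) : ContDiff ℝ (⊤ : ℕ∞) T :=
  contDiff_infty.mpr fun n ↦ (h.contDiff_nat (contDiff_infty.mp hκ n) (contDiff_infty.mp hτ n)).1

lemma norm_tangent (h : IsFrenetFrame κ τ T N B) (s : ℝ) : ‖T s‖ = 1 := (h.orthonormal s).1 0

lemma norm_normal (h : IsFrenetFrame κ τ T N B) (s : ℝ) : ‖N s‖ = 1 := (h.orthonormal s).1 1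

lemma deriv_tangent (h : IsFrenetFrame κ τ T N B) : deriv T = κ • N :=
  funext fun s ↦ (h.hasDerivAt_tangent s).deriv

lemma norm_deriv_tangent (h : IsFrenetFrame κ τ T N B) (s : ℝ) : ‖deriv T s‖ = |κ s| := by
  rw [h.deriv_tangent, Pi.smul_apply', norm_smul, h.norm_normal, mul_one, norm_eq_abs]

lemma deriv_deriv_tangent (h : IsFrenetFrame κ τ T N B) {s : ℝ} (hκ : DifferentiableAt ℝ κ s) :
    deriv (deriv T) s = κ s • (-κ s • T s + τ s • B s) + deriv κ s • N s := by
  rw [h.deriv_tangent, (hκ.hasDerivAt.smul (h.hasDerivAt_normal s)).deriv]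

lemma inner_cross3_deriv_tangent (h : IsFrenetFrame κ τ T N B) {s : ℝ}
    (hκ : DifferentiableAt ℝ κ s) :
    ⟪cross3 (T s) (deriv T s), deriv (deriv T) s⟫ = τ s * κ s ^ 2 := by
  rw [h.deriv_deriv_tangent hκ, h.deriv_tangent, Pi.smul_apply', cross3_smul_right,
    real_inner_smul_left]
  simp only [inner_add_right, inner_smul_right, inner_cross3_self_left, inner_cross3_self_right,
    h.inner_cross3]
  ring

end IsFrenetFrame

/-- Fundamental existence theorem for space curves: given smooth κ > 0 and τ,
there is a unit speed curve with curvature κ and torsion τ. -/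
theorem fundamental_existence_space_curves
    (κ τ : ℝ → ℝ) (hκsm : ContDiff ℝ (⊤ : ℕ∞) κ) (hτsm : ContDiff ℝ (⊤ : ℕ∞) τ)
    (hκpos : ∀ s, 0 < κ s) :
    ∃ ψ : ℝ → E3, ContDiff ℝ (⊤ : ℕ∞) ψ ∧ ∀ s : ℝ,
      ‖deriv ψ s‖ = 1 ∧
      ‖deriv (deriv ψ) s‖ = κ s ∧
      ⟪cross3 (deriv ψ s) (deriv (deriv ψ) s), deriv (deriv (deriv ψ)) s⟫
          / ‖deriv (deriv ψ) s‖ ^ 2 = τ s := by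
  obtain ⟨T, N, B, h⟩ := exists_isFrenetFrame hκsm.continuous hτsm.continuous
  have hT : ContDiff ℝ (⊤ : ℕ∞) T := h.contDiff_tangent hκsm hτsm
  have hψ : ∀ s, HasDerivAt (fun t ↦ ∫ r in (0 : ℝ)..t, T r) (T s) s := fun s ↦
    (hT.continuous.integral_hasStrictDerivAt 0 s).hasDerivAt
  have hψ' : deriv (fun t ↦ ∫ r in (0 : ℝ)..t, T r) = T := funext fun s ↦ (hψ s).deriv
  have hκ_diff : Differentiable ℝ κ := hκsm.differentiable (by simp)
  refine ⟨_, contDiff_succ_of_hasDerivAt (n := ⊤) hψ hT, fun s ↦ ?_⟩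
  rw [hψ', h.norm_deriv_tangent, h.inner_cross3_deriv_tangent (hκ_diff s), abs_of_pos (hκpos s)]
  exact ⟨h.norm_tangent s, rfl, mul_div_cancel_right₀ _ (pow_pos (hκpos s) 2).ne'⟩
end
end

section
/- (Plane curve case, τ = 0.) Let ψ : ℝ → E³ be a unit speed curve with Frenet apparatus (T, N, B, κ, τ) such that κ(s) > 0, τ(s) = 0, and B(s) = e₃ for all s, and with N(s) = B(s) × T(s) for all s. Set θ(s) = ∫₀ˢ κ(t) dt. Then there exists ε ∈ ℝ such that ψ(s) = ψ(0) + ∫₀ˢ ( cos(θ(t) + ε), sin(θ(t) + ε), 0 ) dt for all s ∈ ℝ. -/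
noncomputable section
open Real
open scoped RealInnerProductSpace

/-!
Under the identification of the plane `e₃^⊥` with `ℂ`, the map `v ↦ e₃ × v` is multiplication by
`i`, so the Frenet equation `T' = κ (e₃ × T)` becomes `z' = i κ z`, whence
`z(s) = exp (i (θ(s) - θ(0))) z(0)`. Since `z(0)` is a unit complex number it is `exp (i φ)` for
some angle `φ`, and `ψ` is recovered by integrating `T`.
-/

/-- The orthogonal projection of `E3` along `e₃` onto the horizontal plane, which is identified
with `ℂ` by `(x, y, 0) ↦ x + i y` so that solving the rotation equation `T' = κ (e₃ × T)` becomes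
scalar complex calculus. -/
def horizontalPart : E3 →L[ℝ] ℂ :=
  Complex.equivRealProdCLM.symm.toContinuousLinearMap ∘L
    (EuclideanSpace.proj 0).prod (EuclideanSpace.proj 1)

@[simp]
theorem horizontalPart_re (v : E3) : (horizontalPart v).re = v 0 := rfl

@[simp]
theorem horizontalPart_im (v : E3) : (horizontalPart v).im = v 1 := rfl

theorem vec3_horizontalPart (v : E3) :
    vec3 (horizontalPart v).re (horizontalPart v).im (v 2) = v := by
  ext i
  fin_cases i <;> simp [vec3]

theorem norm_sq_eq_norm_horizontalPart_sq_add (v : E3) :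
    ‖v‖ ^ 2 = ‖horizontalPart v‖ ^ 2 + v 2 ^ 2 := by
  rw [EuclideanSpace.real_norm_sq_eq, Fin.sum_univ_three, Complex.sq_norm, Complex.normSq_apply,
    horizontalPart_re, horizontalPart_im, sq (v 0), sq (v 1)]

theorem cross3_e₃_left (v : E3) : cross3 e₃ v = vec3 (-v 1) (v 0) 0 := by
  simp [cross3, e₃]

theorem horizontalPart_cross3_e₃ (v : E3) :
    horizontalPart (cross3 e₃ v) = Complex.I * horizontalPart v := by
  rw [cross3_e₃_left]
  apply Complex.ext <;> simp [vec3]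

theorem eq_cexp_sub_smul_of_hasDerivAt {E : Type*} [NormedAddCommGroup E] [NormedSpace ℂ E]
    {f : ℝ → E} {a a' : ℝ → ℂ} (ha : ∀ s, HasDerivAt a (a' s) s)
    (hf : ∀ s, HasDerivAt f (a' s • f s) s) (s₀ s : ℝ) :
    f s = Complex.exp (a s - a s₀) • f s₀ := by
  have hconst : Complex.exp (-a s) • f s = Complex.exp (-a s₀) • f s₀ := by
    have hderiv (t : ℝ) : HasDerivAt (fun u => Complex.exp (-a u) • f u) 0 t := by
      refine ((ha t).neg.cexp.smul (hf t)).congr_deriv ?_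
      module
    exact is_const_of_deriv_eq_zero (fun t => (hderiv t).differentiableAt)
      (fun t => (hderiv t).deriv) s s₀
  rw [sub_eq_add_neg, Complex.exp_add, mul_smul, ← hconst, smul_smul, ← Complex.exp_add,
    add_neg_cancel, Complex.exp_zero, one_smul]

section RotatingVector

variable {T : ℝ → E3} {κ θ : ℝ → ℝ}

theorem apply_two_eq_of_hasDerivAt_cross3
    (hT : ∀ s, HasDerivAt T (κ s • cross3 e₃ (T s)) s) (s₀ s : ℝ) : T s 2 = T s₀ 2 := by
  have hderiv (t : ℝ) : HasDerivAt (fun u => T u 2) 0 t := by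
    refine ((EuclideanSpace.proj (𝕜 := ℝ) (2 : Fin 3)).hasFDerivAt.comp_hasDerivAt t
      (hT t)).congr_deriv ?_
    simp [cross3_e₃_left, vec3]
  exact is_const_of_deriv_eq_zero (fun t => (hderiv t).differentiableAt)
    (fun t => (hderiv t).deriv) s s₀

theorem horizontalPart_eq_of_hasDerivAt_cross3
    (hT : ∀ s, HasDerivAt T (κ s • cross3 e₃ (T s)) s)
    (hθ : ∀ s, HasDerivAt θ (κ s) s) (s₀ s : ℝ) :
    horizontalPart (T s) = Complex.exp ((θ s - θ s₀ : ℝ) * Complex.I) * horizontalPart (T s₀) := by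
  have hphase (t : ℝ) : HasDerivAt (fun u => θ u * Complex.I) (κ t * Complex.I) t :=
    (hθ t).ofReal_comp.mul_const Complex.I
  have hz (t : ℝ) : HasDerivAt (fun u => horizontalPart (T u))
      ((κ t * Complex.I) • horizontalPart (T t)) t := by
    refine (horizontalPart.hasFDerivAt.comp_hasDerivAt t (hT t)).congr_deriv ?_
    rw [map_smul, horizontalPart_cross3_e₃, Complex.real_smul, smul_eq_mul, mul_assoc]
  rw [eq_cexp_sub_smul_of_hasDerivAt hphase hz s₀ s, smul_eq_mul, Complex.ofReal_sub, sub_mul]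

theorem exists_eq_vec3_cos_sin_of_hasDerivAt_cross3
    (hT : ∀ s, HasDerivAt T (κ s • cross3 e₃ (T s)) s) (hθ : ∀ s, HasDerivAt θ (κ s) s)
    {s₀ : ℝ} (hnorm : ‖T s₀‖ = 1) (horth : ⟪T s₀, e₃⟫ = 0) :
    ∃ ε : ℝ, ∀ s, T s = vec3 (Real.cos (θ s + ε)) (Real.sin (θ s + ε)) 0 := by
  rw [inner_e₃_right] at horth
  have hunit : ‖horizontalPart (T s₀)‖ = 1 := by
    have hsq := norm_sq_eq_norm_horizontalPart_sq_add (T s₀)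
    rw [hnorm, horth, one_pow, zero_pow two_ne_zero, add_zero] at hsq
    exact (pow_eq_one_iff_of_nonneg (norm_nonneg _) two_ne_zero).1 hsq.symm
  obtain ⟨φ, hφ⟩ := (Complex.norm_eq_one_iff _).1 hunit
  refine ⟨φ - θ s₀, fun s => ?_⟩
  have hz : horizontalPart (T s) = Complex.exp ((θ s + (φ - θ s₀) : ℝ) * Complex.I) := by
    rw [horizontalPart_eq_of_hasDerivAt_cross3 hT hθ s₀ s, ← hφ, ← Complex.exp_add, ← add_mul,
      ← Complex.ofReal_add, sub_add_eq_add_sub, add_sub_assoc]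
  rw [← vec3_horizontalPart (T s), hz, Complex.exp_ofReal_mul_I_re, Complex.exp_ofReal_mul_I_im,
    apply_two_eq_of_hasDerivAt_cross3 hT s₀ s, horth]

end RotatingVector

theorem plane_curve_position_vector_general {ψ T : ℝ → E3} {κ θ : ℝ → ℝ}
    (hψ : ∀ s, HasDerivAt ψ (T s) s) (hT : ∀ s, HasDerivAt T (κ s • cross3 e₃ (T s)) s)
    (hθ : ∀ s, HasDerivAt θ (κ s) s) {s₀ : ℝ} (hnorm : ‖T s₀‖ = 1) (horth : ⟪T s₀, e₃⟫ = 0) :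
    ∃ ε : ℝ, ∀ s : ℝ,
      ψ s = ψ s₀ + ∫ t in s₀..s, vec3 (Real.cos (θ t + ε)) (Real.sin (θ t + ε)) 0 := by
  obtain ⟨ε, hε⟩ := exists_eq_vec3_cos_sin_of_hasDerivAt_cross3 hT hθ hnorm horth
  have hTcont : Continuous T := continuous_iff_continuousAt.2 fun s => (hT s).continuousAt
  refine ⟨ε, fun s => ?_⟩
  simp only [← hε]
  rw [intervalIntegral.integral_eq_sub_of_hasDerivAt (fun t _ => hψ t)
    (hTcont.intervalIntegrable s₀ s), add_sub_cancel]

/-- Example 1: a plane curve (τ = 0, binormal e₃) has the classical natural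
parameterization. -/
theorem plane_curve_position_vector
    (ψ T N B : ℝ → E3) (κ τ : ℝ → ℝ)
    (hψ : ContDiff ℝ (⊤ : ℕ∞) ψ) (hTsm : ContDiff ℝ (⊤ : ℕ∞) T)
    (hNsm : ContDiff ℝ (⊤ : ℕ∞) N) (hBsm : ContDiff ℝ (⊤ : ℕ∞) B)
    (hκsm : ContDiff ℝ (⊤ : ℕ∞) κ) (hτsm : ContDiff ℝ (⊤ : ℕ∞) τ)
    (hT1 : ∀ s, ‖T s‖ = 1) (hN1 : ∀ s, ‖N s‖ = 1) (hB1 : ∀ s, ‖B s‖ = 1)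
    (hTN : ∀ s, ⟪T s, N s⟫ = 0) (hTB : ∀ s, ⟪T s, B s⟫ = 0) (hNB : ∀ s, ⟪N s, B s⟫ = 0)
    (hψT : ∀ s, deriv ψ s = T s)
    (hT' : ∀ s, deriv T s = κ s • N s)
    (hN' : ∀ s, deriv N s = (-(κ s)) • T s + τ s • B s)
    (hB' : ∀ s, deriv B s = (-(τ s)) • N s)
    (hκpos : ∀ s, 0 < κ s) (hτ0 : ∀ s, τ s = 0)
    (hBe₃ : ∀ s, B s = e₃) (hNBT : ∀ s, N s = cross3 (B s) (T s))
    (θ : ℝ → ℝ) (hθ : ∀ s, θ s = ∫ t in (0:ℝ)..s, κ t) :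
    ∃ ε : ℝ, ∀ s : ℝ,
      ψ s = ψ 0 + ∫ t in (0:ℝ)..s,
        vec3 (Real.cos (θ t + ε)) (Real.sin (θ t + ε)) 0 := by
  obtain rfl : θ = fun s => ∫ t in (0:ℝ)..s, κ t := funext hθ
  simp only [hNBT, hBe₃] at hT' hTB
  exact plane_curve_position_vector_general
    (fun s => hψT s ▸ (hψ.differentiable (by simp) s).hasDerivAt)
    (fun s => hT' s ▸ (hTsm.differentiable (by simp) s).hasDerivAt)
    (fun s => (hκsm.continuous.integral_hasStrictDerivAt 0 s).hasDerivAt) (hT1 0) (hTB 0)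
end
end
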